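/- arXiv:2502.02099 — 8 statements merged into one kernel-verified Lean document; each statement's English description precedes it below -/
import Mathlib

section
/- If a matrix X ∈ S^d satisfies the second-order necessary conditions (2NC) for problem (BC), then every matrix F ∈ R^{d×d} with FF^T = X satisfies the second-order necessary conditions (2NC) for problem (DSS). -/
open Matrix

/-- `P` is the Moore–Penrose pseudoinverse of `X`. -/
def IsMoorePenrose {d : ℕ} (X P : Matrix (Fin d) (Fin d) ℝ) : Prop :=
  X * P * X = X ∧ P * X * P = P ∧ (X * P)ᵀ = X * P ∧ (P * X)ᵀ = P * X

/-- Second directional derivative `D²h_X[W,W]` of `h` at `X` along `W`. -/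
noncomputable def D2 {d : ℕ} (h : Matrix (Fin d) (Fin d) ℝ → ℝ)
    (X W : Matrix (Fin d) (Fin d) ℝ) : ℝ :=
  iteratedDeriv 2 (fun t : ℝ => h (X + t • W)) 0

/-- `gh` is the gradient of `h` on the space `S^d` of symmetric matrices, with respect to
the trace inner product `⟨A, B⟩ = tr(AᵀB)`. -/
def IsGradient {d : ℕ} (h : Matrix (Fin d) (Fin d) ℝ → ℝ)
    (gh : Matrix (Fin d) (Fin d) ℝ → Matrix (Fin d) (Fin d) ℝ) : Prop :=
  (∀ X : Matrix (Fin d) (Fin d) ℝ, X.IsSymm → (gh X).IsSymm) ∧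
  ∀ X W : Matrix (Fin d) (Fin d) ℝ, X.IsSymm → W.IsSymm →
    HasDerivAt (fun t : ℝ => h (X + t • W)) ((gh X)ᵀ * W).trace 0

/-- First-order conditions (BC-1C): `X ⪰ 0`, `∇h(X) ⪰ 0`, `∇h(X)X = 0`. -/
def BC1C {d : ℕ} (gh : Matrix (Fin d) (Fin d) ℝ → Matrix (Fin d) (Fin d) ℝ)
    (X : Matrix (Fin d) (Fin d) ℝ) : Prop :=
  X.PosSemidef ∧ (gh X).PosSemidef ∧ gh X * X = 0

/-- Second-order necessary conditions (BC-2NC). -/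
def BC2NC {d : ℕ} (h : Matrix (Fin d) (Fin d) ℝ → ℝ)
    (gh : Matrix (Fin d) (Fin d) ℝ → Matrix (Fin d) (Fin d) ℝ)
    (X : Matrix (Fin d) (Fin d) ℝ) : Prop :=
  BC1C gh X ∧
    ∀ V : Matrix (Fin d) (Fin (d - X.rank)) ℝ, Vᵀ * V = 1 → X * V = 0 →
      ∀ P : Matrix (Fin d) (Fin d) ℝ, IsMoorePenrose X P →
        ∀ W : Matrix (Fin d) (Fin d) ℝ, W.IsSymm → Vᵀ * W * V = 0 →
          0 ≤ D2 h X W + 2 * (W * P * W * gh X).trace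

/-- Second-order necessary conditions (DSS-2NC) for `g(F) = h(FFᵀ)`. -/
def DSS2NC {d : ℕ} (h : Matrix (Fin d) (Fin d) ℝ → ℝ)
    (gh : Matrix (Fin d) (Fin d) ℝ → Matrix (Fin d) (Fin d) ℝ)
    (F : Matrix (Fin d) (Fin d) ℝ) : Prop :=
  gh (F * Fᵀ) * F = 0 ∧
    ∀ Δ : Matrix (Fin d) (Fin d) ℝ,
      0 ≤ D2 h (F * Fᵀ) (F * Δᵀ + Δ * Fᵀ) + 2 * (gh (F * Fᵀ) * Δ * Δᵀ).trace

/-!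
A tangent direction `W = FΔᵀ + ΔFᵀ` at `X = FFᵀ` vanishes on `ker X`, so it is admissible in the
second-order condition of the cone problem. Since `G = ∇h(X)` kills `F`, the curvature term there
is `tr(W X† W G) = tr(G Δ Q Δᵀ)` with `Q = Fᵀ X† F`, and `Q` is an orthogonal projection (onto the
row space of `F`). As `G ⪰ 0`, replacing `Q` by the identity can only increase the trace, which
gives the curvature term `tr(G Δ Δᵀ)` of the factored problem.
-/

section ConjTranspose

variable {m n R : Type*} [Fintype m] [Fintype n]

lemma isStarProjection_conjTranspose_mul_mul [Semiring R] [StarRing R] {F : Matrix n m R}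
    {P : Matrix n n R} (hPH : P.IsHermitian) (hP : P * (F * Fᴴ) * P = P) :
    IsStarProjection (Fᴴ * P * F) where
  isIdempotentElem := calc
    Fᴴ * P * F * (Fᴴ * P * F) = Fᴴ * (P * (F * Fᴴ) * P) * F := by simp only [Matrix.mul_assoc]
    _ = Fᴴ * P * F := by rw [hP]
  isSelfAdjoint := isHermitian_conjTranspose_mul_mul F hPH

lemma conjTranspose_mul_tangent_mul_eq_zero {k : Type*} [Semiring R] [StarRing R]
    {F : Matrix n m R} {V : Matrix n k R} (hFV : Fᴴ * V = 0) (Δ : Matrix n m R) :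
    Vᴴ * (F * Δᴴ + Δ * Fᴴ) * V = 0 := by
  have hVF : Vᴴ * F = 0 := by simpa using congrArg conjTranspose hFV
  rw [Matrix.mul_add, Matrix.add_mul, ← Matrix.mul_assoc, hVF]
  simp only [Matrix.zero_mul, Matrix.mul_assoc, hFV, Matrix.mul_zero, add_zero]

lemma trace_tangent_mul_mul_tangent_mul [CommSemiring R] [StarRing R] {F : Matrix n m R}
    {G : Matrix n n R} (hG : G.IsHermitian) (hGF : G * F = 0) (P : Matrix n n R)
    (Δ : Matrix n m R) :
    ((F * Δᴴ + Δ * Fᴴ) * P * (F * Δᴴ + Δ * Fᴴ) * G).trace =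
      (G * Δ * (Fᴴ * P * F) * Δᴴ).trace := by
  set W := F * Δᴴ + Δ * Fᴴ with hW
  have hFG : Fᴴ * G = 0 := by simpa [hG.eq] using congrArg conjTranspose hGF
  have hWG : W * G = F * Δᴴ * G := by
    rw [hW, Matrix.add_mul, Matrix.mul_assoc Δ, hFG, Matrix.mul_zero, add_zero]
  have hGW : G * W = G * Δ * Fᴴ := by
    rw [hW, Matrix.mul_add, ← Matrix.mul_assoc, hGF, Matrix.zero_mul, zero_add, Matrix.mul_assoc]
  calc (W * P * W * G).trace
      = (W * P * F * Δᴴ * G).trace := by simp only [Matrix.mul_assoc, hWG]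
    _ = (G * W * (P * F * Δᴴ)).trace := by rw [trace_mul_comm]; simp only [Matrix.mul_assoc]
    _ = (G * Δ * (Fᴴ * P * F) * Δᴴ).trace := by rw [hGW]; simp only [Matrix.mul_assoc]

lemma trace_mul_mul_isStarProjection_mul_le [CommRing R] [PartialOrder R] [StarRing R]
    [StarOrderedRing R] {G : Matrix n n R} {Q : Matrix m m R} (hG : G.PosSemidef)
    (hQ : IsStarProjection Q) (Δ : Matrix n m R) :
    (G * Δ * Q * Δᴴ).trace ≤ (G * Δ * Δᴴ).trace := by
  classical
  have hQ' : (1 - Q) * (1 - Q)ᴴ = 1 - Q := by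
    rw [← star_eq_conjTranspose, hQ.one_sub.isSelfAdjoint.star_eq, hQ.one_sub.isIdempotentElem.eq]
  rw [← sub_nonneg]
  calc (0 : R) ≤ ((Δ * (1 - Q))ᴴ * G * (Δ * (1 - Q))).trace :=
        (hG.conjTranspose_mul_mul_same _).trace_nonneg
    _ = (G * Δ * ((1 - Q) * (1 - Q)ᴴ) * Δᴴ).trace := by
      rw [Matrix.mul_assoc, trace_mul_comm, conjTranspose_mul]
      simp only [Matrix.mul_assoc]
    _ = (G * Δ * Δᴴ).trace - (G * Δ * Q * Δᴴ).trace := by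
      rw [hQ', Matrix.mul_sub, Matrix.mul_one, Matrix.sub_mul, trace_sub]

end ConjTranspose

lemma finrank_ker_toEuclideanLin {𝕜 m n : Type*} [RCLike 𝕜] [Finite m] [Fintype n]
    [DecidableEq n] (A : Matrix m n 𝕜) :
    Module.finrank 𝕜 (toEuclideanLin A).ker = Fintype.card n - A.rank := by
  rw [A.rank_eq_finrank_range_toLin (PiLp.basisFun 2 𝕜 m) (PiLp.basisFun 2 𝕜 n), ← toLpLin_eq_toLin,
    ← finrank_euclideanSpace (𝕜 := 𝕜) (ι := n), ← (toEuclideanLin A).finrank_range_add_finrank_ker,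
    Nat.add_sub_cancel_left]

lemma exists_conjTranspose_mul_self_eq_one_mul_eq_zero {𝕜 m n : Type*} [RCLike 𝕜] [Finite m]
    [Fintype n] (A : Matrix m n 𝕜) :
    ∃ V : Matrix n (Fin (Fintype.card n - A.rank)) 𝕜, Vᴴ * V = 1 ∧ A * V = 0 := by
  classical
  let b := (stdOrthonormalBasis 𝕜 (toEuclideanLin A).ker).reindex
    (finCongr (finrank_ker_toEuclideanLin A))
  refine ⟨of fun i j => (b j : EuclideanSpace 𝕜 n) i, ?_, ?_⟩
  · ext i j
    simpa [Matrix.mul_apply, one_apply, PiLp.inner_apply, mul_comm] using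
      orthonormal_iff_ite.mp b.orthonormal i j
  · ext i j
    exact congrArg (fun v : EuclideanSpace 𝕜 m => v i) (LinearMap.mem_ker.mp (b j).2)

/-- The convention `0⁻¹ = 0` is what makes this inverse of `X` on its range vanish on its kernel. -/
lemma isMoorePenrose_cfc_inv {d : ℕ} {X : Matrix (Fin d) (Fin d) ℝ} (hX : X.IsSymm) :
    IsMoorePenrose X (cfc (fun x : ℝ => x⁻¹) X) := by
  have hX' : IsSelfAdjoint X := hX
  have hmul (f g : ℝ → ℝ) : cfc f X * cfc g X = cfc (fun x => f x * g x) X :=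
    (cfc_mul f g X (X.finite_real_spectrum.continuousOn f)
      (X.finite_real_spectrum.continuousOn g)).symm
  have hsymm (f : ℝ → ℝ) : (cfc f X)ᵀ = cfc f X := IsSelfAdjoint.cfc
  have inv_mul_inv (x : ℝ) : x⁻¹ * x * x⁻¹ = x⁻¹ := by simpa using mul_inv_mul_cancel x⁻¹
  suffices h : IsMoorePenrose (cfc (fun x : ℝ => x) X) (cfc (fun x : ℝ => x⁻¹) X) by
    rwa [cfc_id' ℝ X] at h
  simp only [IsMoorePenrose, hmul, hsymm, mul_inv_mul_cancel, inv_mul_inv, and_self]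

/-- `G` and `q` stand for the gradient `∇h(X)` and the Hessian form `W ↦ D²h_X[W,W]`. -/
theorem statement0_general {d : ℕ} {m : Type*} [Fintype m] {X G : Matrix (Fin d) (Fin d) ℝ}
    {q : Matrix (Fin d) (Fin d) ℝ → ℝ} (hG : G.PosSemidef) (hGX : G * X = 0)
    (hq : ∀ V : Matrix (Fin d) (Fin (d - X.rank)) ℝ, Vᵀ * V = 1 → X * V = 0 →
      ∀ P : Matrix (Fin d) (Fin d) ℝ, IsMoorePenrose X P →
        ∀ W : Matrix (Fin d) (Fin d) ℝ, W.IsSymm → Vᵀ * W * V = 0 →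
          0 ≤ q W + 2 * (W * P * W * G).trace)
    {F : Matrix (Fin d) m ℝ} (hF : F * Fᵀ = X) :
    G * F = 0 ∧ ∀ Δ : Matrix (Fin d) m ℝ,
      0 ≤ q (F * Δᵀ + Δ * Fᵀ) + 2 * (G * Δ * Δᵀ).trace := by
  subst hF
  simp only [← conjTranspose_eq_transpose_of_trivial] at hGX hq ⊢
  have hGF : G * F = 0 := (mul_self_mul_conjTranspose_eq_zero F G).mp hGX
  refine ⟨hGF, fun Δ => ?_⟩
  obtain ⟨V, hV, hXV⟩ : ∃ V : Matrix (Fin d) (Fin (d - (F * Fᴴ).rank)) ℝ,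
      Vᴴ * V = 1 ∧ F * Fᴴ * V = 0 := by
    have hker := exists_conjTranspose_mul_self_eq_one_mul_eq_zero (F * Fᴴ)
    rwa [Fintype.card_fin] at hker
  have hFV : Fᴴ * V = 0 := (self_mul_conjTranspose_mul_eq_zero F V).mp hXV
  set P := cfc (fun x : ℝ => x⁻¹) (F * Fᴴ)
  have hP : IsMoorePenrose (F * Fᴴ) P :=
    isMoorePenrose_cfc_inv (isHermitian_mul_conjTranspose_self F)
  have hQ : IsStarProjection (Fᴴ * P * F) :=
    isStarProjection_conjTranspose_mul_mul IsSelfAdjoint.cfc hP.2.1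
  have hW : (F * Δᴴ + Δ * Fᴴ).IsSymm := by simp [IsSymm, add_comm]
  have hcone := hq V hV hXV P hP _ hW (conjTranspose_mul_tangent_mul_eq_zero hFV Δ)
  rw [trace_tangent_mul_mul_tangent_mul hG.isHermitian hGF] at hcone
  linarith [trace_mul_mul_isStarProjection_mul_le hG hQ Δ]

/-- If `X ∈ S^d` satisfies 2NC for (BC), then every `F ∈ ℝ^{d×d}` with `FFᵀ = X`
satisfies 2NC for (DSS). -/
theorem statement0 {d : ℕ} (h : Matrix (Fin d) (Fin d) ℝ → ℝ)
    (gh : Matrix (Fin d) (Fin d) ℝ → Matrix (Fin d) (Fin d) ℝ)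
    (hsm : ContDiff ℝ 2 (fun A : Fin d → Fin d → ℝ => h (Matrix.of A)))
    (hgrad : IsGradient h gh)
    (X : Matrix (Fin d) (Fin d) ℝ) (hXsymm : X.IsSymm)
    (hX : BC2NC h gh X)
    (F : Matrix (Fin d) (Fin d) ℝ) (hF : F * Fᵀ = X) :
    DSS2NC h gh F := by
  subst hF
  exact statement0_general hX.1.2.1 hX.1.2.2 hX.2 rfl
end

section
/- If a matrix F ∈ R^{d×d} satisfies the second-order necessary conditions (2NC) for problem (DSS), then the matrix X = FF^T satisfies the second-order necessary conditions (2NC) for problem (BC). -/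
open Matrix

/-!
The gradient `G = ∇h(FFᵀ)` satisfies `G F = 0`. If `F` is injective then it is surjective, being
square, so `G = 0`; otherwise a kernel vector `w` of `F` makes `Δ = u wᵀ` move `FFᵀ` only to second
order, and the second-order condition along `Δ` reads `‖w‖² ⟨u, G u⟩ ≥ 0`. Hence `G ⪰ 0`.

For `X = FFᵀ`, the matrix `p = X X†` is the orthogonal projection onto the range of `X`, and
`p + V Vᵀ` is an idempotent of trace `d`, hence the identity. So `Vᵀ W V = 0` says
`W = p W + W p - p W p`, which makes `Δ = (W - ½ p W) X† F` a solution of `F Δᵀ + Δ Fᵀ = W`. Since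
`G p = 0`, the curvature term `tr(G Δ Δᵀ)` equals `tr(W X† W G)`, and the second-order condition
along `Δ` is the one along `W`.
-/

variable {n k l : Type*} [Fintype n] [Fintype k] [Fintype l]

section Idempotent

variable {K : Type*} [Field K]

theorem trace_eq_rank_of_isIdempotentElem {A : Matrix n n K} (hA : IsIdempotentElem A) :
    A.trace = A.rank := by
  classical
  have hlin : IsIdempotentElem (toLin' A) := hA.map (toLinAlgEquiv' : Matrix n n K ≃ₐ[K] _)
  rw [← trace_toLin'_eq, (LinearMap.IsIdempotentElem.isProj_range _ hlin).trace]
  rfl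

variable [CharZero K] [DecidableEq n]

theorem eq_one_of_isIdempotentElem_of_trace_eq_card {A : Matrix n n K} (hA : IsIdempotentElem A)
    (htr : A.trace = Fintype.card n) : A = 1 := by
  have hlin : IsIdempotentElem (toLin' (1 - A)) :=
    hA.one_sub.map (toLinAlgEquiv' : Matrix n n K ≃ₐ[K] _)
  have hzero : toLin' (1 - A) = 0 :=
    LinearMap.IsIdempotentElem.eq_zero_of_trace_eq_zero hlin <| by
      rw [trace_toLin'_eq, trace_sub, trace_one, htr, sub_self]
  exact (sub_eq_zero.1 ((LinearEquiv.map_eq_zero_iff _).1 hzero)).symm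

theorem add_mul_eq_one_of_isIdempotentElem [DecidableEq l] {p : Matrix n n K}
    (hp : IsIdempotentElem p) {V : Matrix n l K} {U : Matrix l n K}
    (hUV : U * V = 1) (hpV : p * V = 0) (hUp : U * p = 0)
    (hcard : p.rank + Fintype.card l = Fintype.card n) : p + V * U = 1 := by
  have hVU : IsIdempotentElem (V * U) := by
    rw [IsIdempotentElem, Matrix.mul_assoc, ← Matrix.mul_assoc U, hUV, Matrix.one_mul]
  have hcross : p * (V * U) + V * U * p = 0 := by
    rw [← Matrix.mul_assoc, hpV, Matrix.mul_assoc, hUp, Matrix.zero_mul, Matrix.mul_zero, add_zero]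
  refine eq_one_of_isIdempotentElem_of_trace_eq_card (hp.add hVU hcross) ?_
  rw [trace_add, trace_eq_rank_of_isIdempotentElem hp, trace_mul_comm, hUV, trace_one]
  exact_mod_cast hcard

end Idempotent

namespace IsMoorePenrose

variable {d : ℕ} {X P Q : Matrix (Fin d) (Fin d) ℝ}

theorem isIdempotentElem_mul (hP : IsMoorePenrose X P) : IsIdempotentElem (X * P) := by
  rw [IsIdempotentElem, ← Matrix.mul_assoc, hP.1]

theorem rank_mul (hP : IsMoorePenrose X P) : (X * P).rank = X.rank := by
  refine (rank_mul_le_left X P).antisymm ?_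
  calc X.rank = (X * P * X).rank := by rw [hP.1]
    _ ≤ (X * P).rank := rank_mul_le_left _ _

theorem transpose (hP : IsMoorePenrose X P) : IsMoorePenrose Xᵀ Pᵀ := by
  obtain ⟨hXPX, hPXP, hXP, hPX⟩ := hP
  refine ⟨?_, ?_, ?_, ?_⟩
  · rw [← transpose_mul, ← transpose_mul, ← Matrix.mul_assoc, hXPX]
  · rw [← transpose_mul, ← transpose_mul, ← Matrix.mul_assoc, hPXP]
  · rw [← transpose_mul, hPX, hPX]
  · rw [← transpose_mul, hXP, hXP]

theorem self_mul_eq_self_mul (hP : IsMoorePenrose X P) (hQ : IsMoorePenrose X Q) :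
    X * P = X * Q := by
  calc X * P = (X * Q) * (X * P) := by rw [← Matrix.mul_assoc, hQ.1]
    _ = ((X * P) * (X * Q))ᵀ := by rw [transpose_mul, hP.2.2.1, hQ.2.2.1]
    _ = (X * Q)ᵀ := by rw [← Matrix.mul_assoc, hP.1]
    _ = X * Q := hQ.2.2.1

theorem mul_self_eq_mul_self (hP : IsMoorePenrose X P) (hQ : IsMoorePenrose X Q) :
    P * X = Q * X := by
  simpa only [← transpose_mul, transpose_inj] using hP.transpose.self_mul_eq_self_mul hQ.transpose

protected theorem unique (hP : IsMoorePenrose X P) (hQ : IsMoorePenrose X Q) : P = Q := by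
  calc P = P * X * P := hP.2.1.symm
    _ = Q * X * P := by rw [hP.mul_self_eq_mul_self hQ]
    _ = Q * X * Q := by rw [Matrix.mul_assoc, hP.self_mul_eq_self_mul hQ, ← Matrix.mul_assoc]
    _ = Q := hQ.2.1

theorem isSymm (hP : IsMoorePenrose X P) (hX : X.IsSymm) : P.IsSymm := by
  have hPt := hP.transpose
  rw [hX.eq] at hPt
  exact hPt.unique hP

theorem one_sub_mul_eq_mul_transpose [DecidableEq l] (hP : IsMoorePenrose X P) (hX : X.IsSymm)
    {V : Matrix (Fin d) l ℝ} (hV : Vᵀ * V = 1) (hXV : X * V = 0)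
    (hcard : X.rank + Fintype.card l = d) : 1 - X * P = V * Vᵀ := by
  have hVXP : Vᵀ * (X * P) = 0 := by
    rw [← Matrix.mul_assoc, ← hX.eq, ← transpose_mul, hXV, transpose_zero, Matrix.zero_mul]
  have hXPV : X * P * V = 0 := by
    rw [← transpose_inj, transpose_mul, hP.2.2.1, hVXP, transpose_zero]
  have hsum : X * P + V * Vᵀ = 1 :=
    add_mul_eq_one_of_isIdempotentElem hP.isIdempotentElem_mul hV hXPV hVXP
      (by rw [hP.rank_mul, hcard, Fintype.card_fin])
  rw [← hsum, add_sub_cancel_left]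

end IsMoorePenrose

section FactorLift

variable {K : Type*} [Field K] {F : Matrix n k K} {P W G : Matrix n n K}

/-- A direction `Δ` at the factor `F` whose first-order effect `FΔᵀ + ΔFᵀ` on `FFᵀ` is the symmetric
matrix `W`, when `P` is the pseudoinverse of `FFᵀ` and the quadratic form of `W` vanishes on the
kernel of `FFᵀ`. The factor `1/2` splits the block of `W` on the range of `FFᵀ` evenly between `FΔᵀ`
and its transpose. -/
def factorLift (F : Matrix n k K) (P W : Matrix n n K) : Matrix n k K :=
  (W - (2⁻¹ : K) • (F * Fᵀ * P * W)) * P * F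

theorem mul_transpose_factorLift (hP : P.IsSymm) (hXP : (F * Fᵀ * P).IsSymm) (hW : W.IsSymm) :
    F * (factorLift F P W)ᵀ =
      F * Fᵀ * P * W - (2⁻¹ : K) • (F * Fᵀ * P * W * (F * Fᵀ * P)) := by
  have hXPW : (F * Fᵀ * P * W)ᵀ = W * (F * Fᵀ * P) := by rw [transpose_mul, hXP.eq, hW.eq]
  rw [factorLift, transpose_mul, transpose_mul, transpose_sub, transpose_smul, hXPW, hP.eq, hW.eq,
    ← Matrix.mul_assoc Fᵀ, ← Matrix.mul_assoc F, ← Matrix.mul_assoc F, Matrix.mul_sub,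
    Matrix.mul_smul, ← Matrix.mul_assoc _ W]

theorem mul_transpose_factorLift_add [DecidableEq n] [NeZero (2 : K)] (hP : P.IsSymm)
    (hXP : (F * Fᵀ * P).IsSymm) (hW : W.IsSymm)
    (hker : (1 - F * Fᵀ * P) * W * (1 - F * Fᵀ * P) = 0) :
    F * (factorLift F P W)ᵀ + factorLift F P W * Fᵀ = W := by
  have hFΔ := mul_transpose_factorLift hP hXP hW
  have hΔF : factorLift F P W * Fᵀ = (F * (factorLift F P W)ᵀ)ᵀ := by
    rw [transpose_mul, transpose_transpose]
  rw [hΔF, hFΔ]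
  generalize F * Fᵀ * P = p at *
  have hsplit : p * W + W * p - p * W * p = W := by
    rw [← sub_eq_zero, ← neg_eq_zero, ← hker]
    noncomm_ring
  have htwo : (2⁻¹ : K) + 2⁻¹ = 1 := by rw [← two_mul, mul_inv_cancel₀ two_ne_zero]
  calc p * W - (2⁻¹ : K) • (p * W * p) + (p * W - (2⁻¹ : K) • (p * W * p))ᵀ
      = p * W + W * p - ((2⁻¹ : K) + 2⁻¹) • (p * W * p) := by
        rw [transpose_sub, transpose_smul, transpose_mul, transpose_mul, transpose_mul, hXP.eq,
          hW.eq, ← Matrix.mul_assoc, add_smul]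
        abel
    _ = W := by rw [htwo, one_smul, hsplit]

theorem trace_mul_factorLift_mul_transpose (hG : G.IsSymm) (hGF : G * F = 0) (hP : P.IsSymm)
    (hPXP : P * (F * Fᵀ) * P = P) (hW : W.IsSymm) :
    (G * factorLift F P W * (factorLift F P W)ᵀ).trace = (W * P * W * G).trace := by
  have hGΔ : G * factorLift F P W = G * W * P * F := by
    have hGXPW : G * (F * Fᵀ * P * W) = 0 := by
      simp only [← Matrix.mul_assoc, hGF, Matrix.zero_mul]
    rw [factorLift, ← Matrix.mul_assoc, ← Matrix.mul_assoc, Matrix.mul_sub, Matrix.mul_smul, hGXPW,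
      smul_zero, sub_zero]
  have hΔG : (factorLift F P W)ᵀ * G = Fᵀ * P * W * G := by
    rw [← transpose_inj, transpose_mul, hG.eq, transpose_transpose, hGΔ]
    simp only [transpose_mul, transpose_transpose, hG.eq, hP.eq, hW.eq, Matrix.mul_assoc]
  calc (G * factorLift F P W * (factorLift F P W)ᵀ).trace
      = (W * P * F * ((factorLift F P W)ᵀ * G)).trace := by
        rw [hGΔ, ← Matrix.mul_assoc, trace_mul_comm _ G]
        simp only [Matrix.mul_assoc]
    _ = (W * (P * (F * Fᵀ) * P) * W * G).trace := by
        rw [hΔG]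
        simp only [Matrix.mul_assoc]
    _ = (W * P * W * G).trace := by rw [hPXP]

end FactorLift

theorem trace_mul_vecMulVec_mul_transpose {R : Type*} [CommSemiring R] (G : Matrix n n R)
    (u : n → R) (w : k → R) :
    (G * vecMulVec u w * (vecMulVec u w)ᵀ).trace = (w ⬝ᵥ w) * (u ⬝ᵥ G *ᵥ u) := by
  rw [transpose_vecMulVec, Matrix.mul_assoc, vecMulVec_mul_vecMulVec, mul_vecMulVec,
    trace_vecMulVec, dotProduct_smul, smul_eq_mul, dotProduct_comm u]

theorem eq_zero_of_mul_eq_zero_of_mulVec_injective {m K : Type*} [Field K] {G : Matrix m n K}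
    {F : Matrix n k K} (hF : Function.Injective F.mulVec)
    (hcard : Fintype.card n ≤ Fintype.card k) (hGF : G * F = 0) : G = 0 := by
  have hle : Module.finrank K (k → K) ≤ Module.finrank K (n → K) :=
    LinearMap.finrank_le_finrank_of_injective (f := F.mulVecLin) hF
  have hfinrank : Module.finrank K (k → K) = Module.finrank K (n → K) :=
    hle.antisymm (by simpa only [Module.finrank_fintype_fun_eq_card] using hcard)
  have hsurj : Function.Surjective F.mulVecLin :=
    (LinearMap.injective_iff_surjective_of_finrank_eq_finrank hfinrank).1 hF
  refine mulVec_injective (funext fun v => ?_)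
  obtain ⟨x, rfl⟩ := hsurj v
  rw [mulVecLin_apply, mulVec_mulVec, hGF, zero_mulVec, zero_mulVec]

/-- The second-order necessary conditions at the factor `F ∈ ℝ^{n×k}` for minimizing `h(FFᵀ)`, where
`G` stands for `∇h(FFᵀ)` and `q W` for `D²h_{FFᵀ}[W, W]`; the factor need not be square. -/
def FactoredNC (q : Matrix n n ℝ → ℝ) (G : Matrix n n ℝ) (F : Matrix n k ℝ) : Prop :=
  G * F = 0 ∧ ∀ Δ : Matrix n k ℝ, 0 ≤ q (F * Δᵀ + Δ * Fᵀ) + 2 * (G * Δ * Δᵀ).trace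

namespace FactoredNC

variable {q : Matrix n n ℝ → ℝ} {G : Matrix n n ℝ} {F : Matrix n k ℝ}

theorem dotProduct_mulVec_nonneg (hF : FactoredNC q G F) (hq : q 0 = 0) {w : k → ℝ} (hw : w ≠ 0)
    (hFw : F *ᵥ w = 0) (u : n → ℝ) : 0 ≤ u ⬝ᵥ G *ᵥ u := by
  have hFΔ : F * (vecMulVec u w)ᵀ = 0 := by
    rw [transpose_vecMulVec, mul_vecMulVec, hFw, zero_vecMulVec]
  have hΔF : vecMulVec u w * Fᵀ = 0 := by
    rw [← transpose_inj, transpose_mul, transpose_transpose, hFΔ, transpose_zero]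
  have hcurv := hF.2 (vecMulVec u w)
  rw [hFΔ, hΔF, add_zero, hq, zero_add, trace_mul_vecMulVec_mul_transpose] at hcurv
  have hww : 0 < w ⬝ᵥ w := by simpa using dotProduct_star_self_pos_iff.2 hw
  exact nonneg_of_mul_nonneg_right (nonneg_of_mul_nonneg_right hcurv two_pos) hww

theorem posSemidef (hF : FactoredNC q G F) (hq : q 0 = 0) (hG : G.IsSymm)
    (hcard : Fintype.card n ≤ Fintype.card k) : G.PosSemidef := by
  by_cases hinj : Function.Injective F.mulVec
  · rw [eq_zero_of_mul_eq_zero_of_mulVec_injective hinj hcard hF.1]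
    exact .zero
  · obtain ⟨w, hFw, hw⟩ : ∃ w, F *ᵥ w = 0 ∧ w ≠ 0 := by
      simpa only [← coe_mulVecLin, injective_iff_map_eq_zero, not_forall, exists_prop] using hinj
    exact .of_dotProduct_mulVec_nonneg hG (hF.dotProduct_mulVec_nonneg hq hw hFw)

theorem add_two_mul_trace_nonneg [DecidableEq n] (hF : FactoredNC q G F) (hG : G.IsSymm)
    {P W : Matrix n n ℝ} (hP : P.IsSymm) (hXP : (F * Fᵀ * P).IsSymm)
    (hPXP : P * (F * Fᵀ) * P = P) (hW : W.IsSymm)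
    (hker : (1 - F * Fᵀ * P) * W * (1 - F * Fᵀ * P) = 0) :
    0 ≤ q W + 2 * (W * P * W * G).trace := by
  have hcurv := hF.2 (factorLift F P W)
  rwa [mul_transpose_factorLift_add hP hXP hW hker,
    trace_mul_factorLift_mul_transpose hG hF.1 hP hPXP hW] at hcurv

end FactoredNC

theorem D2_zero {d : ℕ} (h : Matrix (Fin d) (Fin d) ℝ → ℝ) (X : Matrix (Fin d) (Fin d) ℝ) :
    D2 h X 0 = 0 := by
  simp [D2, iteratedDeriv_succ]

theorem statement1_general {d k : ℕ} (hdk : d ≤ k) (h : Matrix (Fin d) (Fin d) ℝ → ℝ)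
    (gh : Matrix (Fin d) (Fin d) ℝ → Matrix (Fin d) (Fin d) ℝ) (hgrad : IsGradient h gh)
    (F : Matrix (Fin d) (Fin k) ℝ) (hF : FactoredNC (D2 h (F * Fᵀ)) (gh (F * Fᵀ)) F) :
    BC2NC h gh (F * Fᵀ) := by
  have hX : (F * Fᵀ).IsSymm := by rw [IsSymm, transpose_mul, transpose_transpose]
  have hG : (gh (F * Fᵀ)).IsSymm := hgrad.1 _ hX
  refine ⟨⟨posSemidef_self_mul_conjTranspose F, hF.posSemidef (D2_zero h _) hG (by simpa using hdk),
    by rw [← Matrix.mul_assoc, hF.1, Matrix.zero_mul]⟩, fun V hV hXV P hP W hW hVWV => ?_⟩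
  have hrank : (F * Fᵀ).rank ≤ d := by simpa using (F * Fᵀ).rank_le_card_width
  have hproj : 1 - F * Fᵀ * P = V * Vᵀ :=
    hP.one_sub_mul_eq_mul_transpose hX hV hXV (by rw [Fintype.card_fin, Nat.add_sub_cancel' hrank])
  have hker : (1 - F * Fᵀ * P) * W * (1 - F * Fᵀ * P) = 0 := by
    calc (1 - F * Fᵀ * P) * W * (1 - F * Fᵀ * P) = V * (Vᵀ * W * V) * Vᵀ := by
          rw [hproj]
          simp only [Matrix.mul_assoc]
      _ = 0 := by rw [hVWV, Matrix.mul_zero, Matrix.zero_mul]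
  exact hF.add_two_mul_trace_nonneg hG (hP.isSymm hX) hP.2.2.1 hP.2.1 hW hker

/-- If `F ∈ ℝ^{d×d}` satisfies 2NC for (DSS), then `X = FFᵀ` satisfies 2NC for (BC). -/
theorem statement1 {d : ℕ} (h : Matrix (Fin d) (Fin d) ℝ → ℝ)
    (gh : Matrix (Fin d) (Fin d) ℝ → Matrix (Fin d) (Fin d) ℝ)
    (hsm : ContDiff ℝ 2 (fun A : Fin d → Fin d → ℝ => h (Matrix.of A)))
    (hgrad : IsGradient h gh)
    (F : Matrix (Fin d) (Fin d) ℝ)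
    (hF : DSS2NC h gh F) :
    BC2NC h gh (F * Fᵀ) :=
  statement1_general le_rfl h gh hgrad F hF
end

section
/- Suppose a rank-r matrix X ∈ S^d has a factorization X = FF^T for some F ∈ R^{d×k} with k ≥ r, and S ∈ S^d satisfies SF = 0 and S ⪰ 0. Then for any Δ ∈ R^{d×d}, letting W = FΔ^T + ΔF^T, one has tr(S(ΔΔ^T − W X† W)) ≥ 0. -/
open Matrix

/-!
Since `S * F = 0`, only one term of `tr (S * W * P * W)` survives, and the trace in question is
`tr (Δᴴ * S * Δ * (1 - Q))` with `Q = Fᴴ * P * F`. Cancelling `Fᴴ` in `X * P * X = X` gives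
`F * Q = F`, which already forces `Q` to be an orthogonal projection.
Hence `1 - Q` is one too, and the trace is that of the positive semidefinite matrix
`(1 - Q) * (Δᴴ * S * Δ) * (1 - Q)`.
-/

section

variable {m n R : Type*} [Fintype m] [Fintype n]

theorem mul_conjTranspose_mul_mul_self_of_inner_inverse [Ring R] [PartialOrder R] [StarRing R]
    [StarOrderedRing R] [NoZeroDivisors R] {F : Matrix m n R} {P : Matrix m m R}
    (hP : F * Fᴴ * P * (F * Fᴴ) = F * Fᴴ) : F * (Fᴴ * P * F) = F := by
  classical
  have annihilates_gram : (F * Fᴴ * P - 1) * (F * Fᴴ) = 0 := by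
    rw [Matrix.sub_mul, Matrix.one_mul, hP, sub_self]
  have annihilates_factor := (mul_self_mul_conjTranspose_eq_zero F _).mp annihilates_gram
  rw [Matrix.sub_mul, Matrix.one_mul, sub_eq_zero] at annihilates_factor
  simpa only [Matrix.mul_assoc] using annihilates_factor

theorem isStarProjection_conjTranspose_mul_mul_of_inner_inverse [Ring R] [PartialOrder R]
    [StarRing R] [StarOrderedRing R] [NoZeroDivisors R] {F : Matrix m n R} {P : Matrix m m R}
    (hP : F * Fᴴ * P * (F * Fᴴ) = F * Fᴴ) : IsStarProjection (Fᴴ * P * F) := by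
  set Q := Fᴴ * P * F with hQ
  have conjTranspose_eq : Qᴴ = Fᴴ * Pᴴ * F := by
    simp only [hQ, conjTranspose_mul, conjTranspose_conjTranspose, Matrix.mul_assoc]
  have conjTranspose_mul_self : Qᴴ * Q = Qᴴ := by
    rw [conjTranspose_eq, Matrix.mul_assoc, mul_conjTranspose_mul_mul_self_of_inner_inverse hP]
  -- `Qᴴ * Q` is always Hermitian, so `Q` is.
  have hermitian : Qᴴ = Q := by
    simpa only [conjTranspose_mul_self, conjTranspose_conjTranspose, eq_comm] using
      (isHermitian_conjTranspose_mul_self Q).eq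
  exact ⟨by rwa [hermitian] at conjTranspose_mul_self, hermitian⟩

theorem trace_mul_nonneg_of_isStarProjection [CommRing R] [PartialOrder R] [StarRing R]
    [AddLeftMono R] {A B : Matrix n n R} (hA : A.PosSemidef) (hB : IsStarProjection B) :
    0 ≤ (A * B).trace :=
  calc
    0 ≤ (Bᴴ * A * B).trace := (hA.conjTranspose_mul_mul_same B).trace_nonneg
    _ = (A * (B * B)).trace := by
      rw [← star_eq_conjTranspose, hB.isSelfAdjoint.star_eq, trace_mul_cycle', Matrix.mul_assoc,
        trace_mul_comm]
    _ = (A * B).trace := by rw [hB.isIdempotentElem.eq]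

theorem trace_mul_symmetrized_mul_mul_symmetrized [CommRing R] [StarRing R] {S : Matrix m m R}
    {F : Matrix m n R} (hS : S.IsHermitian) (hSF : S * F = 0) (P : Matrix m m R)
    (Δ : Matrix m n R) :
    (S * ((F * Δᴴ + Δ * Fᴴ) * P * (F * Δᴴ + Δ * Fᴴ))).trace =
      (Δᴴ * S * Δ * (Fᴴ * P * F)).trace := by
  have hFS : Fᴴ * S = 0 := by
    rw [← hS.eq, ← conjTranspose_mul, hSF, conjTranspose_zero]
  calc
    _ = (S * Δ * Fᴴ * P * (F * Δᴴ + Δ * Fᴴ)).trace := by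
      simp only [Matrix.mul_add, Matrix.add_mul, ← Matrix.mul_assoc, hSF, Matrix.zero_mul, zero_add]
    _ = (S * Δ * (Fᴴ * P * F) * Δᴴ).trace + (S * Δ * Fᴴ * P * Δ * Fᴴ).trace := by
      simp only [Matrix.mul_add, trace_add, Matrix.mul_assoc]
    _ = (Δᴴ * S * Δ * (Fᴴ * P * F)).trace + (Fᴴ * S * (Δ * Fᴴ * P * Δ)).trace := by
      rw [trace_mul_comm _ Δᴴ, trace_mul_comm _ Fᴴ]
      simp only [Matrix.mul_assoc]
    _ = (Δᴴ * S * Δ * (Fᴴ * P * F)).trace := by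
      rw [hFS, Matrix.zero_mul, trace_zero, add_zero]

theorem statement2_general [CommRing R] [PartialOrder R] [StarRing R] [StarOrderedRing R]
    [NoZeroDivisors R] {X : Matrix m m R} {F : Matrix m n R} (hFX : F * Fᴴ = X)
    {S : Matrix m m R} (hSF : S * F = 0) (hS : S.PosSemidef) {P : Matrix m m R}
    (hP : X * P * X = X) (Δ : Matrix m n R) :
    0 ≤ (S * (Δ * Δᴴ - (F * Δᴴ + Δ * Fᴴ) * P * (F * Δᴴ + Δ * Fᴴ))).trace := by
  classical
  subst hFX
  calc
    0 ≤ (Δᴴ * S * Δ * (1 - Fᴴ * P * F)).trace :=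
      trace_mul_nonneg_of_isStarProjection (hS.conjTranspose_mul_mul_same Δ)
        (isStarProjection_conjTranspose_mul_mul_of_inner_inverse hP).one_sub
    _ = (Δᴴ * S * Δ).trace - (Δᴴ * S * Δ * (Fᴴ * P * F)).trace := by
      rw [Matrix.mul_sub, Matrix.mul_one, trace_sub]
    _ = _ := by
      rw [Matrix.mul_sub, trace_sub,
        trace_mul_symmetrized_mul_mul_symmetrized hS.isHermitian hSF,
        ← Matrix.mul_assoc S, trace_mul_comm _ Δᴴ, ← Matrix.mul_assoc Δᴴ]

end

/-- Suppose a rank-`r` matrix `X ∈ S^d` is factored as `X = FFᵀ` with `F ∈ ℝ^{d×k}`, `k ≥ r`,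
and `S ∈ S^d` satisfies `SF = 0` and `S ⪰ 0`. Then for any `Δ`, with `W = FΔᵀ + ΔFᵀ`,
one has `tr(S(ΔΔᵀ − W X† W)) ≥ 0`. -/
theorem statement2 {d k : ℕ}
    (X : Matrix (Fin d) (Fin d) ℝ) (hXsymm : X.IsSymm) (hk : X.rank ≤ k)
    (F : Matrix (Fin d) (Fin k) ℝ) (hFX : F * Fᵀ = X)
    (S : Matrix (Fin d) (Fin d) ℝ) (hSsymm : S.IsSymm)
    (hSF : S * F = 0) (hS : S.PosSemidef)
    (P : Matrix (Fin d) (Fin d) ℝ) (hP : IsMoorePenrose X P)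
    (Δ : Matrix (Fin d) (Fin k) ℝ) :
    0 ≤ (S * (Δ * Δᵀ - (F * Δᵀ + Δ * Fᵀ) * P * (F * Δᵀ + Δ * Fᵀ))).trace := by
  simpa only [conjTranspose_eq_transpose_of_trivial] using
    statement2_general (F.conjTranspose_eq_transpose_of_trivial ▸ hFX) hSF hS hP.1 Δ
end

section
/- Suppose a matrix X ∈ S^d with rank r ≤ d has a factorization X = FF^T for some F ∈ R^{d×k} with k ≥ r, and S ∈ S^d satisfies SX = 0. Then for any W ∈ S^d such that V_X^T W V_X = 0, there exists Δ ∈ R^{d×k} such that (i) W = ΔF^T + FΔ^T, and (ii) tr(S(W X† W − ΔΔ^T)) = 0. -/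
open Matrix

/-!
If `W` vanishes on the kernel of `X = F Fᴴ` and `X P X = X`, then `1 - P X` maps into that kernel,
so with `E = P X` the corner `(1 - E)ᴴ W (1 - E)` is zero and `W = W E + Eᴴ W - Eᴴ W E`. Giving half
of the last term to each of the first two yields `W = G X + X Gᴴ`, and `Δ = G F` satisfies (i).

For (ii), `Fᴴ P F` fixes `Δ = G F` from the right, for every `P` with `X P X = X`, because
`F Fᴴ P F = F`. Of the four terms of `W P W = (Δ Fᴴ + F Δᴴ) P (Δ Fᴴ + F Δᴴ)`, only
`Δ Fᴴ P F Δᴴ = Δ Δᴴ` survives under `tr (S ·)`, since `S F = 0` and `Fᴴ S = 0`.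
-/

section LinearSystems

variable {l m n p : Type*}

theorem exists_matrix_mul_mul_self_eq {K : Type*} [Field K] [Fintype m] [Fintype n]
    (X : Matrix m n K) : ∃ P : Matrix n m K, X * P * X = X := by
  classical
  let g := X.mulVecLin.rangeRestrict
  obtain ⟨s, hgs⟩ := g.exists_rightInverse_of_surjective X.mulVecLin.range_rangeRestrict
  obtain ⟨t, hts⟩ := s.exists_extend
  refine ⟨t.toMatrix', Matrix.ext_of_mulVec_single fun i ↦ ?_⟩
  have ht : t (X *ᵥ Pi.single i 1) = s (g (Pi.single i 1)) :=
    LinearMap.congr_fun hts (g (Pi.single i 1))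
  rw [← mulVec_mulVec, ← mulVec_mulVec, LinearMap.toMatrix'_mulVec, ht]
  exact congrArg Subtype.val (LinearMap.congr_fun hgs (g (Pi.single i 1)))

theorem exists_matrix_mul_eq_of_ker_le_range {R : Type*} [CommSemiring R] [Fintype m] [Fintype n]
    {X : Matrix l m R} {V : Matrix m n R} (hV : X.mulVecLin.ker ≤ V.mulVecLin.range)
    {A : Matrix m p R} (hA : X * A = 0) : ∃ C : Matrix n p R, V * C = A := by
  have hcol (j : p) : ∃ c, V *ᵥ c = A.col j :=
    hV <| funext fun i ↦ congrFun (congrFun hA i) j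
  choose c hc using hcol
  exact ⟨of fun i j ↦ c j i, Matrix.ext fun i j ↦ congrFun (hc j) i⟩

theorem matrix_mul_eq_zero_of_range_le_ker {R : Type*} [CommSemiring R] [Fintype m] [Fintype n]
    {X : Matrix l m R} {V : Matrix m n R} (hV : V.mulVecLin.range ≤ X.mulVecLin.ker) :
    X * V = 0 := by
  classical
  refine Matrix.ext_of_mulVec_single fun i ↦ ?_
  rw [← mulVec_mulVec, zero_mulVec]
  exact hV ⟨Pi.single i 1, rfl⟩

theorem finrank_ker_mulVecLin {K : Type*} [Field K] [Fintype n] (X : Matrix m n K) :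
    Module.finrank K X.mulVecLin.ker = Fintype.card n - X.rank := by
  rw [← Module.finrank_fintype_fun_eq_card (R := K), ← X.mulVecLin.finrank_range_add_finrank_ker]
  exact (Nat.add_sub_cancel_left ..).symm

end LinearSystems

section StarRing

variable {n k R : Type*} [Fintype n] [Fintype k] [CommRing R] [StarRing R]

theorem exists_eq_mul_add_mul_conjTranspose [DecidableEq n] [Invertible (2 : R)]
    {X P W : Matrix n n R} (hX : X.IsHermitian) (hW : W.IsHermitian)
    (hcorner : (1 - P * X)ᴴ * W * (1 - P * X) = 0) :
    ∃ G : Matrix n n R, W = G * X + X * Gᴴ := by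
  set E := P * X with hE
  have hW_eq : W = W * E + Eᴴ * W - Eᴴ * W * E := by
    rw [← sub_eq_zero, ← hcorner, conjTranspose_sub, conjTranspose_one]
    noncomm_ring
  let G := W * P - (⅟2 : R) • (Eᴴ * W * P)
  have hGX : G * X = W * E - (⅟2 : R) • (Eᴴ * W * E) := by
    simp only [G, hE, Matrix.sub_mul, Matrix.smul_mul, Matrix.mul_assoc]
  have hXG : X * Gᴴ = Eᴴ * W - (⅟2 : R) • (Eᴴ * W * E) := by
    simpa [hX.eq, hW.eq, star_invOf, Matrix.mul_assoc] using congrArg conjTranspose hGX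
  refine ⟨G, ?_⟩
  calc W = W * E + Eᴴ * W - ((⅟2 : R) + ⅟2) • (Eᴴ * W * E) := by
        rw [invOf_two_add_invOf_two, one_smul, ← hW_eq]
    _ = G * X + X * Gᴴ := by rw [hGX, hXG]; module

theorem trace_mul_sub_mul_conjTranspose_eq_zero {S P W : Matrix n n R} {F Δ : Matrix n k R}
    (hSF : S * F = 0) (hFS : Fᴴ * S = 0) (hΔ : Δ * Fᴴ * P * F = Δ)
    (hW : W = Δ * Fᴴ + F * Δᴴ) : (S * (W * P * W - Δ * Δᴴ)).trace = 0 := by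
  have hSW : S * W = S * Δ * Fᴴ := by
    rw [hW, Matrix.mul_add, ← Matrix.mul_assoc S F, hSF, Matrix.zero_mul, add_zero,
      Matrix.mul_assoc]
  have hSWPW : S * (W * P * W) = S * Δ * Fᴴ * P * Δ * Fᴴ + S * (Δ * Δᴴ) := by
    calc S * (W * P * W) = S * Δ * Fᴴ * P * W := by simp only [← Matrix.mul_assoc, hSW]
      _ = S * Δ * Fᴴ * P * Δ * Fᴴ + S * (Δ * Fᴴ * P * F) * Δᴴ := by
        rw [hW]; simp only [Matrix.mul_add, Matrix.mul_assoc]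
      _ = S * Δ * Fᴴ * P * Δ * Fᴴ + S * (Δ * Δᴴ) := by rw [hΔ, Matrix.mul_assoc S Δ Δᴴ]
  rw [Matrix.mul_sub, hSWPW, add_sub_cancel_right, trace_mul_comm]
  simp only [← Matrix.mul_assoc, hFS, Matrix.zero_mul, trace_zero]

end StarRing

theorem mul_conjTranspose_mul_mul_eq_self {n k R : Type*} [Fintype n] [Fintype k] [Ring R]
    [NoZeroDivisors R] [PartialOrder R] [StarRing R] [StarOrderedRing R]
    {F : Matrix n k R} {P : Matrix n n R} (hP : F * Fᴴ * P * (F * Fᴴ) = F * Fᴴ) :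
    F * Fᴴ * P * F = F := by
  classical
  have hzero : (F * Fᴴ * P - 1) * (F * Fᴴ) = 0 := by
    rw [Matrix.sub_mul, hP, Matrix.one_mul, sub_self]
  rw [mul_self_mul_conjTranspose_eq_zero, Matrix.sub_mul, Matrix.one_mul] at hzero
  exact sub_eq_zero.1 hzero

section OrthonormalColumns

variable {n 𝕜 : Type*} [Fintype n] [RCLike 𝕜]

theorem exists_conjTranspose_mul_self_eq_one_and_range_eq (K : Submodule 𝕜 (n → 𝕜)) {r : ℕ}
    (hr : Module.finrank 𝕜 K = r) :
    ∃ V : Matrix n (Fin r) 𝕜, Vᴴ * V = 1 ∧ V.mulVecLin.range = K := by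
  subst hr
  let e := (WithLp.linearEquiv 2 𝕜 (n → 𝕜)).symm
  let b := (stdOrthonormalBasis 𝕜 (K.map e.toLinearMap)).reindex (finCongr (e.finrank_map_eq K))
  let f := e.symm.toLinearMap ∘ₗ (K.map e.toLinearMap).subtype
  refine ⟨of fun i j ↦ f (b j) i, ?_, ?_⟩
  · ext i j
    rw [one_apply, ← orthonormal_iff_ite.1 b.orthonormal i j]
    simp [f, e, Submodule.coe_inner, PiLp.inner_apply, mul_apply, mul_comm]
  · calc (of fun i j ↦ f (b j) i).mulVecLin.range
        = Submodule.span 𝕜 (f '' Set.range b.toBasis) := by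
          rw [range_mulVecLin, ← Set.range_comp, b.coe_toBasis]; rfl
      _ = f.range := by rw [← Submodule.map_span, b.toBasis.span_eq, LinearMap.range_eq_map]
      _ = K := by
          rw [LinearMap.range_comp, Submodule.range_subtype, ← Submodule.map_comp]
          simp

end OrthonormalColumns

theorem statement3_general {n k ν 𝕜 : Type*} [Fintype n] [Fintype k] [Fintype ν] [Field 𝕜]
    [PartialOrder 𝕜] [StarRing 𝕜] [StarOrderedRing 𝕜]
    {X : Matrix n n 𝕜} {F : Matrix n k 𝕜} (hFX : F * Fᴴ = X)
    {V : Matrix n ν 𝕜} (hV : X.mulVecLin.ker ≤ V.mulVecLin.range)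
    {W : Matrix n n 𝕜} (hW : W.IsHermitian) (hVW : Vᴴ * W * V = 0) :
    ∃ Δ : Matrix n k 𝕜, W = Δ * Fᴴ + F * Δᴴ ∧
      ∀ S : Matrix n n 𝕜, S * X = 0 → X * S = 0 → ∀ P : Matrix n n 𝕜, X * P * X = X →
        (S * (W * P * W - Δ * Δᴴ)).trace = 0 := by
  classical
  have : Invertible (2 : 𝕜) := invertibleOfNonzero two_ne_zero
  subst hFX
  obtain ⟨Q, hQ⟩ := exists_matrix_mul_mul_self_eq (F * Fᴴ)
  obtain ⟨C, hC⟩ := exists_matrix_mul_eq_of_ker_le_range hV (A := 1 - Q * (F * Fᴴ)) <| by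
    rw [Matrix.mul_sub, Matrix.mul_one, ← Matrix.mul_assoc, hQ, sub_self]
  have hcorner : (V * C)ᴴ * W * (V * C) = 0 := by
    calc (V * C)ᴴ * W * (V * C) = Cᴴ * (Vᴴ * W * V) * C := by
          simp only [conjTranspose_mul, Matrix.mul_assoc]
      _ = 0 := by rw [hVW, Matrix.mul_zero, Matrix.zero_mul]
  obtain ⟨G, hG⟩ := exists_eq_mul_add_mul_conjTranspose (isHermitian_mul_conjTranspose_self F) hW
    (hC ▸ hcorner)
  have hΔ : W = G * F * Fᴴ + F * (G * F)ᴴ := by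
    rw [hG, conjTranspose_mul, Matrix.mul_assoc, Matrix.mul_assoc]
  refine ⟨G * F, hΔ, fun S hSX hXS P hP ↦ ?_⟩
  have hPF : F * (Fᴴ * (P * F)) = F := by
    simpa only [Matrix.mul_assoc] using mul_conjTranspose_mul_mul_eq_self hP
  exact trace_mul_sub_mul_conjTranspose_eq_zero ((mul_self_mul_conjTranspose_eq_zero F S).1 hSX)
    ((self_mul_conjTranspose_mul_eq_zero F S).1 hXS)
    (by simp only [Matrix.mul_assoc, hPF]) hΔ

/-- Suppose `X ∈ S^d` of rank `r ≤ d` is factored as `X = FFᵀ` with `F ∈ ℝ^{d×k}`, `k ≥ r`,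
and `S ∈ S^d` satisfies `SX = 0`. Then for any symmetric `W` with `V_Xᵀ W V_X = 0`
(where `V_X` is any matrix with orthonormal columns spanning the null space of `X`),
there is `Δ ∈ ℝ^{d×k}` with (i) `W = ΔFᵀ + FΔᵀ` and (ii) `tr(S(W X† W − ΔΔᵀ)) = 0`. -/
theorem statement3 {d k : ℕ}
    (X : Matrix (Fin d) (Fin d) ℝ) (hXsymm : X.IsSymm) (hk : X.rank ≤ k)
    (F : Matrix (Fin d) (Fin k) ℝ) (hFX : F * Fᵀ = X)
    (S : Matrix (Fin d) (Fin d) ℝ) (hSsymm : S.IsSymm) (hSX : S * X = 0)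
    (W : Matrix (Fin d) (Fin d) ℝ) (hWsymm : W.IsSymm)
    (hW : ∀ V : Matrix (Fin d) (Fin (d - X.rank)) ℝ,
      Vᵀ * V = 1 → X * V = 0 → Vᵀ * W * V = 0) :
    ∃ Δ : Matrix (Fin d) (Fin k) ℝ,
      W = Δ * Fᵀ + F * Δᵀ ∧
      ∀ P : Matrix (Fin d) (Fin d) ℝ, IsMoorePenrose X P →
        (S * (W * P * W - Δ * Δᵀ)).trace = 0 := by
  have hXS : X * S = 0 := by
    simpa [hXsymm.eq, hSsymm.eq] using congrArg transpose hSX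
  obtain ⟨V, hVV, hV⟩ := exists_conjTranspose_mul_self_eq_one_and_range_eq X.mulVecLin.ker
    ((finrank_ker_mulVecLin X).trans (by rw [Fintype.card_fin]))
  obtain ⟨Δ, hΔ, htr⟩ := statement3_general hFX hV.ge hWsymm
    (hW V hVV (matrix_mul_eq_zero_of_range_le_ker hV.le))
  exact ⟨Δ, hΔ, fun P hP ↦ htr S hSX hXS P hP.1⟩
end

section
/- Suppose a matrix X ∈ S^d with rank r has a factorization X = F·F with F ∈ S^d symmetric, F satisfies the eigenvalue condition (EC), and S ∈ S^d satisfies SX = 0. Then for any W ∈ S^d such that V_X^T W V_X = 0, there exists a symmetric Δ ∈ S^d such that (i) W = ΔF + FΔ, and (ii) tr(S(W X† W − Δ²)) = 0. -/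
open Matrix

/-- `a` is an eigenvalue of `F`. -/
def IsEigOf {d : ℕ} (F : Matrix (Fin d) (Fin d) ℝ) (a : ℝ) : Prop :=
  ∃ v : Fin d → ℝ, v ≠ 0 ∧ F.mulVec v = a • v

/-- The eigenvalue condition (EC): no two nonzero eigenvalues of `F` sum to `0`. -/
def EigCond {d : ℕ} (F : Matrix (Fin d) (Fin d) ℝ) : Prop :=
  ∀ a b : ℝ, IsEigOf F a → IsEigOf F b → a ≠ 0 → b ≠ 0 → a + b ≠ 0

/-!
In an orthonormal eigenbasis of `F` the equation `W = ΔF + FΔ` reads `W i j = (λ i + λ j) Δ i j`.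
By (EC), `λ i + λ j = 0` only when `λ i = λ j = 0`, and there `W i j = 0` because `W` vanishes on
`ker X = ker F`. Hence there is a solution `Δ` which itself vanishes on `ker F`.

Since `SF = FS = 0`, expanding `S W X† W` leaves `SΔ(F X† F)Δ + SΔF X† ΔF`. The matrix `F X† F` is
the projection onto the range of `F`, so `SΔ(F X† F) = SΔ` by the vanishing of `Δ` on `ker F`, and
the first term is `SΔ²`. The second one is traceless by cyclicity and `FS = 0`.
-/

section VanishesOnKer

variable {m n p q R : Type*} [Fintype n]

/-- The form `(u, v) ↦ u* W v` vanishes on the null space of `X`. This is the condition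
`V_Xᵀ W V_X = 0` without a choice of the basis `V_X`. -/
def VanishesOnKer [NonUnitalNonAssocSemiring R] [Star R]
    (X : Matrix m n R) (W : Matrix n n R) : Prop :=
  ∀ u v : n → R, X *ᵥ u = 0 → X *ᵥ v = 0 → star u ⬝ᵥ W *ᵥ v = 0

namespace VanishesOnKer

lemma conjTranspose_mul_mul_eq_zero [NonUnitalSemiring R] [Star R] {X : Matrix m n R}
    {W : Matrix n n R} (h : VanishesOnKer X W) {A : Matrix n p R} {B : Matrix n q R}
    (hA : X * A = 0) (hB : X * B = 0) : Aᴴ * W * B = 0 := by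
  ext i j
  rw [Matrix.mul_assoc]
  exact h (A.col i) (B.col j) (funext fun k => congrFun₂ hA k i) (funext fun k => congrFun₂ hB k j)

lemma conjStarAlgAut [DecidableEq n] [CommRing R] [StarRing R] {F W : Matrix n n R}
    (h : VanishesOnKer F W) (U : unitary (Matrix n n R)) :
    VanishesOnKer (Unitary.conjStarAlgAut R _ U F) (Unitary.conjStarAlgAut R _ U W) := by
  simp only [VanishesOnKer, Unitary.conjStarAlgAut_apply]
  have hker (w : n → R) (hw : (U * F * star U : Matrix n n R) *ᵥ w = 0) :
      F *ᵥ ((star U : Matrix n n R) *ᵥ w) = 0 := by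
    simpa [← Matrix.mul_assoc] using congrArg ((star U : Matrix n n R) *ᵥ ·) hw
  intro u v hu hv
  simpa [star_mulVec, ← star_eq_conjTranspose, ← dotProduct_mulVec, Matrix.mul_assoc] using
    h _ _ (hker u hu) (hker v hv)

end VanishesOnKer

lemma vanishesOnKer_diagonal_iff [DecidableEq n] [Semiring R] [NoZeroDivisors R] [StarRing R]
    {l : n → R} {W : Matrix n n R} :
    VanishesOnKer (diagonal l) W ↔ ∀ i j, l i = 0 → l j = 0 → W i j = 0 := by
  refine ⟨fun h i j hi hj => ?_, fun h u v hu hv => ?_⟩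
  · simpa [← Pi.single_star] using
      h (Pi.single i 1) (Pi.single j 1) (by simp [hi]) (by simp [hj])
  · have hker (w : n → R) (hw : diagonal l *ᵥ w = 0) (i : n) : l i = 0 ∨ w i = 0 :=
      mul_eq_zero.mp (by rw [← mulVec_diagonal, hw, Pi.zero_apply])
    refine Finset.sum_eq_zero fun i _ => ?_
    rcases hker u hu i with hi | hi
    · have hWv : (W *ᵥ v) i = 0 := Finset.sum_eq_zero fun j _ =>
        (hker v hv j).elim (fun hj => by simp [h i j hi hj]) (fun hj => by simp [hj])
      rw [hWv, mul_zero]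
    · simp [hi]

end VanishesOnKer

section OrthonormalKernelBasis

variable {m n p : Type*} [Fintype n]

lemma range_mulVecLin_eq_ker_mulVecLin {K : Type*} [Field K] [Fintype p]
    {X : Matrix m n K} {V : Matrix n p K} (hXV : X * V = 0)
    (hrank : V.rank + X.rank = Fintype.card n) :
    LinearMap.range V.mulVecLin = LinearMap.ker X.mulVecLin := by
  refine Submodule.eq_of_le_of_finrank_eq ?_ ?_
  · rintro _ ⟨a, rfl⟩
    simp [hXV]
  · have hdim := X.mulVecLin.finrank_range_add_finrank_ker
    rw [Module.finrank_fintype_fun_eq_card] at hdim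
    simp only [Matrix.rank] at hrank
    omega

variable {𝕜 : Type*} [RCLike 𝕜]

lemma exists_orthonormal_columns_mul_eq_zero (X : Matrix m n 𝕜) {k : ℕ}
    (hk : k + X.rank = Fintype.card n) :
    ∃ V : Matrix n (Fin k) 𝕜, Vᴴ * V = 1 ∧ X * V = 0 := by
  let e := (WithLp.linearEquiv 2 𝕜 (n → 𝕜)).symm
  let K : Submodule 𝕜 (EuclideanSpace 𝕜 n) := (LinearMap.ker X.mulVecLin).map e.toLinearMap
  have hK : Module.finrank 𝕜 K = k := by
    have hdim := X.mulVecLin.finrank_range_add_finrank_ker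
    rw [Module.finrank_fintype_fun_eq_card, ← Matrix.rank] at hdim
    rw [LinearEquiv.finrank_map_eq]
    omega
  let b := (stdOrthonormalBasis 𝕜 K).reindex (finCongr hK)
  refine ⟨of fun i j => (b j : EuclideanSpace 𝕜 n) i, ?_, ?_⟩
  · ext i j
    rw [← inner_matrix_col_col, one_apply, ← orthonormal_iff_ite.mp b.orthonormal i j]
    rfl
  · ext i j
    obtain ⟨v, hv, hvb⟩ := (b j).2
    have hXb : X *ᵥ (b j : EuclideanSpace 𝕜 n).ofLp = 0 := by
      rw [← hvb]
      exact hv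
    exact congrFun hXb i

open scoped ComplexOrder in
lemma vanishesOnKer_of_forall_orthonormal_columns {X : Matrix m n 𝕜} {W : Matrix n n 𝕜} {k : ℕ}
    (hk : k + X.rank = Fintype.card n)
    (h : ∀ V : Matrix n (Fin k) 𝕜, Vᴴ * V = 1 → X * V = 0 → Vᴴ * W * V = 0) :
    VanishesOnKer X W := by
  classical
  obtain ⟨V, hV, hXV⟩ := exists_orthonormal_columns_mul_eq_zero X hk
  have hVrank : V.rank = k := by
    rw [← rank_conjTranspose_mul_self, hV, rank_one, Fintype.card_fin]
  have hspan := range_mulVecLin_eq_ker_mulVecLin hXV (hVrank.symm ▸ hk)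
  intro u v hu hv
  obtain ⟨a, rfl⟩ : u ∈ LinearMap.range V.mulVecLin := hspan ▸ hu
  obtain ⟨b, rfl⟩ : v ∈ LinearMap.range V.mulVecLin := hspan ▸ hv
  calc star (V *ᵥ a) ⬝ᵥ W *ᵥ (V *ᵥ b) = star a ⬝ᵥ (Vᴴ * W * V) *ᵥ b := by
        rw [star_mulVec, ← dotProduct_mulVec, mulVec_mulVec, mulVec_mulVec, Matrix.mul_assoc]
    _ = 0 := by rw [h V hV hXV, zero_mulVec, dotProduct_zero]

end OrthonormalKernelBasis

section SylvesterEquation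

variable {n : Type*} [Fintype n] [DecidableEq n]

lemma exists_isHermitian_sylvester_diagonal {K : Type*} [Field K] [StarRing K] {l : n → K}
    (hl : IsSelfAdjoint l) (hsum : ∀ i j, l i ≠ 0 → l j ≠ 0 → l i + l j ≠ 0)
    {W : Matrix n n K} (hW : W.IsHermitian) (hlW : VanishesOnKer (diagonal l) W) :
    ∃ Δ : Matrix n n K, Δ.IsHermitian ∧ W = Δ * diagonal l + diagonal l * Δ ∧
      VanishesOnKer (diagonal l) Δ := by
  rw [vanishesOnKer_diagonal_iff] at hlW
  -- Where `l i = l j = 0` the quotient is `0 / 0 = 0`, so `Δ` has no null block.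
  refine ⟨of fun i j => W i j / (l i + l j), ?_, ?_, ?_⟩
  · ext i j
    have hstar (i : n) : star (l i) = l i := congrFun hl.star_eq i
    simp [hstar, hW.apply, add_comm]
  · ext i j
    rw [Matrix.add_apply, mul_diagonal, diagonal_mul, of_apply]
    by_cases hij : l i + l j = 0
    · have hi : l i = 0 := by
        by_contra hi
        exact hsum i j hi (fun hj => hi (by simpa [hj] using hij)) hij
      have hj : l j = 0 := by simpa [hi] using hij
      simp [hi, hj, hlW i j hi hj]
    · field_simp
      ring
  · refine vanishesOnKer_diagonal_iff.mpr fun i j hi hj => ?_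
    simp [hi, hj]

lemma exists_isHermitian_sylvester {𝕜 : Type*} [RCLike 𝕜] {F W : Matrix n n 𝕜}
    (hF : F.IsHermitian)
    (hEC : ∀ a ∈ spectrum ℝ F, ∀ b ∈ spectrum ℝ F, a ≠ 0 → b ≠ 0 → a + b ≠ 0)
    (hW : W.IsHermitian) (hFW : VanishesOnKer F W) :
    ∃ Δ : Matrix n n 𝕜, Δ.IsHermitian ∧ W = Δ * F + F * Δ ∧ VanishesOnKer F Δ := by
  let φ := Unitary.conjStarAlgAut 𝕜 (Matrix n n 𝕜) hF.eigenvectorUnitary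
  let l : n → 𝕜 := RCLike.ofReal ∘ hF.eigenvalues
  have hFl : F = φ (diagonal l) := hF.spectral_theorem
  have hl : IsSelfAdjoint l := funext fun i => RCLike.conj_ofReal _
  have hsum (i j : n) : l i ≠ 0 → l j ≠ 0 → l i + l j ≠ 0 := by
    simpa [l, ← RCLike.ofReal_add, -map_add] using
      hEC _ (hF.eigenvalues_mem_spectrum_real i) _ (hF.eigenvalues_mem_spectrum_real j)
  have hlW : VanishesOnKer (diagonal l) (φ.symm W) := by
    rw [← φ.symm_apply_apply (diagonal l), ← hFl, Unitary.conjStarAlgAut_symm]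
    exact hFW.conjStarAlgAut _
  obtain ⟨D, hD, hWD, hlD⟩ := exists_isHermitian_sylvester_diagonal hl hsum
    (hW.isSelfAdjoint.map φ.symm).isHermitian hlW
  refine ⟨φ D, (hD.isSelfAdjoint.map φ).isHermitian, ?_, ?_⟩
  · rw [hFl, ← map_mul, ← map_mul, ← map_add, ← hWD, φ.apply_symm_apply]
  · rw [hFl]
    exact hlD.conjStarAlgAut _

end SylvesterEquation

section Trace

variable {n : Type*} [Fintype n]

lemma trace_mul_sylvester_sub_sq_eq_zero {R : Type*} [CommRing R] {F S P Δ : Matrix n n R}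
    (hSF : S * F = 0) (hFS : F * S = 0) (hSΔ : S * Δ * (F * P * F) = S * Δ) :
    (S * ((Δ * F + F * Δ) * P * (Δ * F + F * Δ) - Δ * Δ)).trace = 0 := by
  have hexpand : S * ((Δ * F + F * Δ) * P * (Δ * F + F * Δ) - Δ * Δ) =
      S * Δ * F * P * Δ * F := by
    calc S * ((Δ * F + F * Δ) * P * (Δ * F + F * Δ) - Δ * Δ)
        = S * Δ * F * P * Δ * F + S * Δ * (F * P * F) * Δ - S * Δ * Δ
          + S * F * (Δ * P * (Δ * F + F * Δ)) := by noncomm_ring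
      _ = S * Δ * F * P * Δ * F := by
        rw [hSF, Matrix.zero_mul, hSΔ, add_zero, add_sub_cancel_right]
  calc (S * ((Δ * F + F * Δ) * P * (Δ * F + F * Δ) - Δ * Δ)).trace
      = (F * S * (Δ * F * P * Δ)).trace := by
        rw [hexpand, trace_mul_comm]
        simp only [Matrix.mul_assoc]
    _ = 0 := by rw [hFS, Matrix.zero_mul, trace_zero]

variable {𝕜 : Type*} [RCLike 𝕜]

open scoped ComplexOrder in
lemma VanishesOnKer.mul_mul_mul_eq_mul {F S P Δ : Matrix n n 𝕜}
    (hFΔ : VanishesOnKer F Δ) (hF : F.IsHermitian) (hP : F * F * P * (F * F) = F * F)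
    (hSF : S * F = 0) : S * Δ * (F * P * F) = S * Δ := by
  classical
  have hFPF : F * (1 - F * P * F) = 0 := by
    have hcancel : (F * F * P - 1) * (F * Fᴴ) = 0 := by
      rw [hF.eq, Matrix.sub_mul, hP, Matrix.one_mul, sub_self]
    rw [mul_self_mul_conjTranspose_eq_zero] at hcancel
    calc F * (1 - F * P * F) = -((F * F * P - 1) * F) := by noncomm_ring
      _ = 0 := by rw [hcancel, neg_zero]
  have hFS : F * Sᴴ = 0 := by
    rw [← hF.eq, ← conjTranspose_mul, hSF, conjTranspose_zero]
  have hSΔ := hFΔ.conjTranspose_mul_mul_eq_zero hFS hFPF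
  rw [conjTranspose_conjTranspose, Matrix.mul_sub, Matrix.mul_one, sub_eq_zero] at hSΔ
  exact hSΔ.symm

end Trace

lemma isEigOf_of_mem_spectrum {d : ℕ} {F : Matrix (Fin d) (Fin d) ℝ} {a : ℝ}
    (ha : a ∈ spectrum ℝ F) : IsEigOf F a := by
  rw [← spectrum_toLin', ← Module.End.hasEigenvalue_iff_mem_spectrum] at ha
  obtain ⟨v, hv⟩ := ha.exists_hasEigenvector
  exact ⟨v, hv.2, hv.apply_eq_smul⟩

open scoped ComplexOrder in
theorem statement4_general {n 𝕜 : Type*} [Fintype n] [DecidableEq n] [RCLike 𝕜]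
    {F X W : Matrix n n 𝕜} (hF : F.IsHermitian)
    (hEC : ∀ a ∈ spectrum ℝ F, ∀ b ∈ spectrum ℝ F, a ≠ 0 → b ≠ 0 → a + b ≠ 0)
    (hFX : F * F = X) (hW : W.IsHermitian) (hXW : VanishesOnKer X W) :
    ∃ Δ : Matrix n n 𝕜, Δ.IsHermitian ∧ W = Δ * F + F * Δ ∧
      ∀ S P : Matrix n n 𝕜, S * X = 0 → X * S = 0 → X * P * X = X →
        (S * (W * P * W - Δ * Δ)).trace = 0 := by
  subst hFX
  have hker (v : n → 𝕜) (hv : F *ᵥ v = 0) : (F * F) *ᵥ v = 0 := by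
    rw [← mulVec_mulVec, hv, mulVec_zero]
  obtain ⟨Δ, hΔ, rfl, hFΔ⟩ := exists_isHermitian_sylvester hF hEC hW
    fun u v hu hv => hXW u v (hker u hu) (hker v hv)
  refine ⟨Δ, hΔ, rfl, fun S P hSX hXS hP => ?_⟩
  have hSF : S * F = 0 := (mul_self_mul_conjTranspose_eq_zero F S).mp (by rwa [hF.eq])
  have hFS : F * S = 0 := (conjTranspose_mul_self_mul_eq_zero F S).mp (by rwa [hF.eq])
  exact trace_mul_sylvester_sub_sq_eq_zero hSF hFS (hFΔ.mul_mul_mul_eq_mul hF hP hSF)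

/-- Suppose `X ∈ S^d` is factored as `X = F·F` with `F ∈ S^d` symmetric satisfying the
eigenvalue condition (EC), and `S ∈ S^d` satisfies `SX = 0`. Then for any symmetric `W` with
`V_Xᵀ W V_X = 0`, there is a symmetric `Δ` with (i) `W = ΔF + FΔ` and
(ii) `tr(S(W X† W − Δ²)) = 0`. -/
theorem statement4 {d : ℕ}
    (F : Matrix (Fin d) (Fin d) ℝ) (hFsymm : F.IsSymm) (hEC : EigCond F)
    (X : Matrix (Fin d) (Fin d) ℝ) (hFX : F * F = X)
    (S : Matrix (Fin d) (Fin d) ℝ) (hSsymm : S.IsSymm) (hSX : S * X = 0)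
    (W : Matrix (Fin d) (Fin d) ℝ) (hWsymm : W.IsSymm)
    (hW : ∀ V : Matrix (Fin d) (Fin (d - X.rank)) ℝ,
      Vᵀ * V = 1 → X * V = 0 → Vᵀ * W * V = 0) :
    ∃ Δ : Matrix (Fin d) (Fin d) ℝ, Δ.IsSymm ∧
      W = Δ * F + F * Δ ∧
      ∀ P : Matrix (Fin d) (Fin d) ℝ, IsMoorePenrose X P →
        (S * (W * P * W - Δ * Δ)).trace = 0 := by
  have hkd : d - X.rank + X.rank = Fintype.card (Fin d) := by
    rw [Nat.sub_add_cancel X.rank_le_width, Fintype.card_fin]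
  have hXW : VanishesOnKer X W :=
    vanishesOnKer_of_forall_orthonormal_columns hkd (by simpa using hW)
  have hXS : X * S = 0 := by
    simpa [← hFX, hFsymm.eq, hSsymm.eq] using congrArg transpose hSX
  obtain ⟨Δ, hΔ, hWΔ, htrace⟩ := statement4_general (isHermitian_iff_isSymm.mpr hFsymm)
    (fun a ha b hb => hEC a b (isEigOf_of_mem_spectrum ha) (isEigOf_of_mem_spectrum hb))
    hFX (isHermitian_iff_isSymm.mpr hWsymm) hXW
  exact ⟨Δ, isHermitian_iff_isSymm.mp hΔ, hWΔ, fun P hP => htrace S P hSX hXS hP.1⟩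
end

section
/- If a symmetric matrix F ∈ S^d satisfies the second-order necessary conditions (2NC) for problem (DSS-Sym), then the matrix X = F² satisfies the first-order conditions (1C) for problem (BC). -/
open Matrix

/-- The symmetric product `A∘B = (ABᵀ + BAᵀ)/2`. -/
noncomputable def symProd {d : ℕ} (A B : Matrix (Fin d) (Fin d) ℝ) :
    Matrix (Fin d) (Fin d) ℝ :=
  (2⁻¹ : ℝ) • (A * Bᵀ + B * Aᵀ)

/-- Second-order necessary conditions (DSS-Sym-2NC) for `g(F) = h(F²)`, `F ∈ S^d`. -/
noncomputable def DSSSym2NC {d : ℕ} (h : Matrix (Fin d) (Fin d) ℝ → ℝ)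
    (gh : Matrix (Fin d) (Fin d) ℝ → Matrix (Fin d) (Fin d) ℝ)
    (F : Matrix (Fin d) (Fin d) ℝ) : Prop :=
  symProd (gh (F * F)) F = 0 ∧
    ∀ Δ : Matrix (Fin d) (Fin d) ℝ, Δ.IsSymm →
      0 ≤ D2 h (F * F) ((2 : ℝ) • symProd F Δ) + 2 * (gh (F * F) * (Δ * Δ)).trace

/-!
Write `G = ∇h(F²)`. The first-order condition says that `F` and `G` anticommute, so `K = FGF`
anticommutes with `F`. Hence every direction `Δ = 1 + tK` has the same `W = FΔ + ΔF = 2F`, while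
`tr(GΔ²) = tr G - 2t‖FG‖² + t² tr(GK²)`. The last trace vanishes: `GK²` is a word with three letters
`G`, and moving its last `F` cyclically past all of them changes the sign. A lower bound valid for
all real `t` thus forces `FG = 0`. Eigenvectors of `G` for nonzero eigenvalues then lie in `ker F`;
for `v ∈ ker F` the direction `Δ = vvᴴ` has `W = 0`, and the second-order condition reads
`0 ≤ ‖v‖² ⟨v, Gv⟩`.
-/

section Anticommuting

variable {n R : Type*} [Fintype n] {F G : Matrix n n R}

lemma semiconjBy_neg_mul_mul_self [NonUnitalRing R] (h : SemiconjBy F G (-G)) :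
    SemiconjBy F (F * G * F) (-(F * G * F)) := by
  have hF : SemiconjBy F F F := Commute.refl F
  simpa only [mul_neg, neg_mul] using (hF.mul_right h).mul_right hF

lemma mul_mul_mul_eq_neg_conjTranspose_mul_self [NonUnitalRing R] [StarRing R]
    (hF : F.IsHermitian) (hG : G.IsHermitian) (h : SemiconjBy F G (-G)) :
    G * (F * G * F) = -((F * G)ᴴ * (F * G)) := by
  calc G * (F * G * F) = -(G * F * (-G * F)) := by simp only [mul_assoc, neg_mul, mul_neg, neg_neg]
    _ = -((F * G)ᴴ * (F * G)) := by rw [← h.eq, conjTranspose_mul, hF.eq, hG.eq]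

lemma trace_mul_eq_zero_of_semiconjBy_neg [CommRing R] [IsAddTorsionFree R]
    (h : SemiconjBy F G (-G)) : (G * F).trace = 0 := by
  refine self_eq_neg.mp ?_
  calc (G * F).trace = (F * G).trace := trace_mul_comm G F
    _ = -(G * F).trace := by rw [h.eq, neg_mul, trace_neg]

lemma trace_mul_sq_mul_mul_eq_zero [CommRing R] [IsAddTorsionFree R]
    (h : SemiconjBy F G (-G)) : (G * (F * G * F * (F * G * F))).trace = 0 := by
  have hF : SemiconjBy F F F := Commute.refl F
  have hodd : SemiconjBy F (G * (F * G * F) * (F * G)) (-(G * (F * G * F) * (F * G))) := by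
    simpa only [mul_neg, neg_mul, neg_neg] using
      (h.mul_right (semiconjBy_neg_mul_mul_self h)).mul_right (hF.mul_right h)
  simpa only [mul_assoc] using trace_mul_eq_zero_of_semiconjBy_neg hodd

end Anticommuting

lemma eq_zero_of_forall_nonneg_add_mul {k : Type*} [Field k] [LinearOrder k]
    [IsStrictOrderedRing k] {b c : k} (h : ∀ t, 0 ≤ c + t * b) : b = 0 := by
  by_contra hb
  have hneg := h (-(c + 1) / b)
  rw [div_mul_cancel₀ _ hb] at hneg
  linarith

section Products

variable {n R : Type*} [Fintype n]

lemma trace_mul_sq_one_add_smul {S : Type*} [CommSemiring S] [Semiring R] [Algebra S R]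
    [DecidableEq n] (G K : Matrix n n R) (t : S) :
    (G * ((1 + t • K) * (1 + t • K))).trace =
      G.trace + (2 * t) • (G * K).trace + t ^ 2 • (G * (K * K)).trace := by
  have hexpand : G * ((1 + t • K) * (1 + t • K)) =
      G + (2 * t) • (G * K) + t ^ 2 • (G * (K * K)) := by
    simp only [mul_add, add_mul, mul_one, one_mul, mul_smul_comm, smul_mul_assoc]
    module
  simp only [hexpand, trace_add, trace_smul]

lemma trace_mul_sq_vecMulVec [CommSemiring R] (G : Matrix n n R) (v w : n → R) :
    (G * (vecMulVec v w * vecMulVec v w)).trace = (w ⬝ᵥ v) * (w ⬝ᵥ G *ᵥ v) := by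
  rw [vecMulVec_mul_vecMulVec, vecMulVec_smul, mul_smul_comm, trace_smul, mul_vecMulVec,
    trace_vecMulVec, dotProduct_comm (G *ᵥ v), smul_eq_mul]

lemma mul_eq_zero_swap_of_isHermitian [NonUnitalSemiring R] [StarRing R] {A B : Matrix n n R}
    (hA : A.IsHermitian) (hB : B.IsHermitian) (h : A * B = 0) : B * A = 0 := by
  simpa only [conjTranspose_mul, hA.eq, hB.eq, conjTranspose_zero] using congrArg conjTranspose h

end Products

section RCLike

open scoped ComplexOrder

variable {m n 𝕜 : Type*} [Fintype n] [RCLike 𝕜]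

lemma eq_zero_of_re_trace_conjTranspose_mul_self [Fintype m] {A : Matrix m n 𝕜}
    (h : RCLike.re (Aᴴ * A).trace = 0) : A = 0 := by
  have him := (RCLike.nonneg_iff.mp (posSemidef_conjTranspose_mul_self A).trace_nonneg).2
  refine trace_conjTranspose_mul_self_eq_zero_iff.mp (RCLike.ext ?_ ?_)
  · rw [h, map_zero]
  · rw [him, map_zero]

lemma mul_eq_zero_of_forall_nonneg_add_trace {F G : Matrix n n 𝕜} (hF : F.IsHermitian)
    (hG : G.IsHermitian) (hFG : SemiconjBy F G (-G)) {c : ℝ}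
    (h : ∀ Δ : Matrix n n 𝕜, Δ.IsHermitian → F * Δ + Δ * F = 2 • F →
      0 ≤ c + RCLike.re (G * (Δ * Δ)).trace) :
    F * G = 0 := by
  classical
  set K := F * G * F
  have hKherm : K.IsHermitian := by
    simpa only [hF.eq] using isHermitian_conjTranspose_mul_mul F hG
  have hFK : F * K + K * F = 0 := by
    rw [(semiconjBy_neg_mul_mul_self hFG).eq, neg_mul, neg_add_cancel]
  have hGK : (G * K).trace = -((F * G)ᴴ * (F * G)).trace := by
    rw [mul_mul_mul_eq_neg_conjTranspose_mul_self hF hG hFG, trace_neg]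
  have hbound (t : ℝ) :
      0 ≤ c + RCLike.re G.trace + t * (-2 * RCLike.re ((F * G)ᴴ * (F * G)).trace) := by
    have hΔ := h (1 + t • K) (isHermitian_one.add (hKherm.smul (.all t))) (by
      calc F * (1 + t • K) + (1 + t • K) * F = 2 • F + t • (F * K + K * F) := by
            simp only [mul_add, add_mul, mul_one, one_mul, mul_smul_comm, smul_mul_assoc]
            module
        _ = 2 • F := by rw [hFK, smul_zero, add_zero])
    rw [trace_mul_sq_one_add_smul, hGK, trace_mul_sq_mul_mul_eq_zero hFG] at hΔ
    simp only [smul_neg, smul_zero, add_zero, map_add, map_neg, RCLike.smul_re] at hΔ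
    linarith
  have hslope := eq_zero_of_forall_nonneg_add_mul hbound
  exact eq_zero_of_re_trace_conjTranspose_mul_self (by linarith)

lemma posSemidef_of_nonneg_on_ker {F : Matrix m n 𝕜} {G : Matrix n n 𝕜} (hG : G.IsHermitian)
    (hFG : F * G = 0) (h : ∀ v, F *ᵥ v = 0 → 0 ≤ RCLike.re (star v ⬝ᵥ G *ᵥ v)) :
    G.PosSemidef := by
  classical
  refine hG.posSemidef_iff_eigenvalues_nonneg.mpr fun i => ?_
  rcases eq_or_ne (hG.eigenvalues i) 0 with hzero | hne
  · exact hzero.ge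
  · rw [hG.eigenvalues_eq]
    refine h _ ((smul_eq_zero.mp ?_).resolve_left hne)
    rw [← mulVec_smul, ← hG.mulVec_eigenvectorBasis, mulVec_mulVec, hFG, zero_mulVec]

lemma re_dotProduct_mulVec_nonneg_of_trace_nonneg {F : Matrix m n 𝕜} {G : Matrix n n 𝕜}
    (h : ∀ Δ : Matrix n n 𝕜, Δ.IsHermitian → F * Δ = 0 → 0 ≤ RCLike.re (G * (Δ * Δ)).trace)
    {v : n → 𝕜} (hv : F *ᵥ v = 0) : 0 ≤ RCLike.re (star v ⬝ᵥ G *ᵥ v) := by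
  rcases eq_or_ne v 0 with rfl | hne
  · simp
  obtain ⟨hre, him⟩ := RCLike.pos_iff.mp (dotProduct_star_self_pos_iff.mpr hne)
  have hΔ := h (vecMulVec v (star v)) (posSemidef_vecMulVec_self_star v).isHermitian
    (by rw [mul_vecMulVec, hv, zero_vecMulVec])
  rw [trace_mul_sq_vecMulVec, RCLike.mul_re, him, zero_mul, sub_zero] at hΔ
  exact nonneg_of_mul_nonneg_right hΔ hre

/-- Here `G` plays the role of `∇h(F²)` and `Q` that of `W ↦ D²h_{F²}[W, W]`. -/
theorem statement6_general {F G : Matrix n n 𝕜} (hF : F.IsHermitian) (hG : G.IsHermitian)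
    (hFG : SemiconjBy F G (-G)) {Q : Matrix n n 𝕜 → ℝ} (hQ : Q 0 = 0)
    (h : ∀ Δ : Matrix n n 𝕜, Δ.IsHermitian →
      0 ≤ Q (F * Δ + Δ * F) + 2 * RCLike.re (G * (Δ * Δ)).trace) :
    (F * F).PosSemidef ∧ G.PosSemidef ∧ G * (F * F) = 0 := by
  have hmul : F * G = 0 := by
    refine mul_eq_zero_of_forall_nonneg_add_trace hF hG hFG (c := Q (2 • F) / 2) fun Δ hΔ hW => ?_
    have hnonneg := h Δ hΔ
    rw [hW] at hnonneg
    linarith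
  have htrace (Δ : Matrix n n 𝕜) (hΔ : Δ.IsHermitian) (hFΔ : F * Δ = 0) :
      0 ≤ RCLike.re (G * (Δ * Δ)).trace := by
    have hnonneg := h Δ hΔ
    rw [hFΔ, mul_eq_zero_swap_of_isHermitian hF hΔ hFΔ, add_zero, hQ] at hnonneg
    linarith
  refine ⟨?_, ?_, ?_⟩
  · simpa only [hF.eq] using posSemidef_conjTranspose_mul_self F
  · exact posSemidef_of_nonneg_on_ker hG hmul fun v =>
      re_dotProduct_mulVec_nonneg_of_trace_nonneg htrace
  · rw [← mul_assoc, mul_eq_zero_swap_of_isHermitian hF hG hmul, zero_mul]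

end RCLike

section Real

variable {d : ℕ} {A B : Matrix (Fin d) (Fin d) ℝ}

lemma two_smul_symProd (hA : A.IsSymm) (hB : B.IsSymm) :
    (2 : ℝ) • symProd A B = A * B + B * A := by
  rw [symProd, hA.eq, hB.eq, smul_inv_smul₀ two_ne_zero]

lemma semiconjBy_neg_of_symProd_eq_zero (hA : A.IsSymm) (hB : B.IsSymm) (h : symProd A B = 0) :
    SemiconjBy B A (-A) := by
  rw [SemiconjBy, neg_mul, ← add_eq_zero_iff_eq_neg, add_comm, ← two_smul_symProd hA hB, h,
    smul_zero]

lemma D2_zero_right (h : Matrix (Fin d) (Fin d) ℝ → ℝ) (X : Matrix (Fin d) (Fin d) ℝ) :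
    D2 h X 0 = 0 := by
  simp only [D2, smul_zero, add_zero, iteratedDeriv_const, two_ne_zero, if_false]

end Real

/-- If a symmetric `F ∈ S^d` satisfies 2NC for (DSS-Sym), then `X = F²` satisfies the
first-order conditions (1C) for (BC). -/
theorem statement6 {d : ℕ} (h : Matrix (Fin d) (Fin d) ℝ → ℝ)
    (gh : Matrix (Fin d) (Fin d) ℝ → Matrix (Fin d) (Fin d) ℝ)
    (hsm : ContDiff ℝ 2 (fun A : Fin d → Fin d → ℝ => h (Matrix.of A)))
    (hgrad : IsGradient h gh)
    (F : Matrix (Fin d) (Fin d) ℝ) (hFsymm : F.IsSymm)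
    (hF : DSSSym2NC h gh F) :
    BC1C gh (F * F) := by
  have hG : (gh (F * F)).IsSymm := hgrad.1 _ (by rw [IsSymm, transpose_mul, hFsymm.eq])
  refine statement6_general (isHermitian_iff_isSymm.mpr hFsymm) (isHermitian_iff_isSymm.mpr hG)
    (semiconjBy_neg_of_symProd_eq_zero hG hFsymm hF.1) (D2_zero_right h (F * F)) fun Δ hΔ => ?_
  have hΔsymm := isHermitian_iff_isSymm.mp hΔ
  simpa only [two_smul_symProd hFsymm hΔsymm, RCLike.re_to_real] using hF.2 Δ hΔsymm
end

section
/- Let F ∈ S^d and S ∈ S^d satisfy S∘F = 0. If for every Δ ∈ S^d with 2F∘Δ = 0 one has 2·tr(SΔ²) ≥ 0, and F satisfies the eigenvalue condition (EC), then S ⪰ 0. -/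
open Matrix

/-!
If `T` has no nonzero eigenvalue whose negative is also an eigenvalue and `S` anticommutes with
`T`, then `S` kills every eigenspace of `T` for a nonzero eigenvalue `a`, because it would map it
into the eigenspace for `-a`. For diagonalizable `T` this gives `ker T + ker S = E`, so only the
values of the quadratic form of `S` on `ker T` matter. For matrices these values are tested by
`Δ = v vᵀ` with `F v = 0`: then `F ∘ Δ = 0` and `tr (S Δ²) = ‖v‖² (vᵀ S v)`.
-/

section Module

variable {R M : Type*} [CommRing R] [AddCommGroup M] [Module R M] {f g : Module.End R M}

lemma apply_mem_eigenspace_neg_of_anticommute (hfg : g * f + f * g = 0) {a : R} {x : M}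
    (hx : x ∈ f.eigenspace a) : g x ∈ f.eigenspace (-a) := by
  rw [Module.End.mem_eigenspace_iff] at hx ⊢
  have hsum : a • g x + f (g x) = 0 := by simpa [hx] using LinearMap.congr_fun hfg x
  rw [neg_smul]
  exact eq_neg_of_add_eq_zero_right hsum

lemma eigenspace_le_ker_of_anticommute (hfg : g * f + f * g = 0) {a : R}
    (ha : f.HasEigenvalue a → ¬ f.HasEigenvalue (-a)) : f.eigenspace a ≤ LinearMap.ker g := by
  intro x hx
  by_contra hgx
  have hx0 : x ≠ 0 := fun h ↦ hgx (h ▸ zero_mem _)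
  exact ha (Module.End.hasEigenvalue_of_hasEigenvector ⟨hx, hx0⟩)
    (Module.End.hasEigenvalue_of_hasEigenvector
      ⟨apply_mem_eigenspace_neg_of_anticommute hfg hx, hgx⟩)

lemma ker_sup_ker_eq_top_of_anticommute (hf : ⨆ a, f.eigenspace a = ⊤) (hfg : g * f + f * g = 0)
    (hneg : ∀ a ≠ 0, f.HasEigenvalue a → ¬ f.HasEigenvalue (-a)) :
    LinearMap.ker f ⊔ LinearMap.ker g = ⊤ := by
  rw [eq_top_iff, ← hf]
  refine iSup_le fun a ↦ ?_
  obtain rfl | ha := eq_or_ne a 0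
  · exact f.eigenspace_zero.trans_le le_sup_left
  · exact (eigenspace_le_ker_of_anticommute hfg (hneg a ha)).trans le_sup_right

end Module

section InnerProductSpace

variable {𝕜 E : Type*} [RCLike 𝕜] [NormedAddCommGroup E] [InnerProductSpace 𝕜 E]
  {S T : Module.End 𝕜 E}

lemma isPositive_of_re_inner_nonneg_of_sup_ker_eq_top (hS : S.IsSymmetric) {K : Submodule 𝕜 E}
    (hK : K ⊔ LinearMap.ker S = ⊤) (hpos : ∀ x ∈ K, 0 ≤ RCLike.re (inner 𝕜 (S x) x)) :
    S.IsPositive := by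
  refine ⟨hS, fun x ↦ ?_⟩
  obtain ⟨k, hk, w, hw, rfl⟩ := Submodule.mem_sup.mp (hK ▸ Submodule.mem_top : x ∈ K ⊔ _)
  have hSw : S w = 0 := hw
  have hinner : inner 𝕜 (S (k + w)) (k + w) = inner 𝕜 (S k) k := by
    rw [map_add, hSw, add_zero, inner_add_right, hS k w, hSw, inner_zero_right, add_zero]
  exact hinner ▸ hpos k hk

lemma iSup_eigenspace_eq_top_of_isSymmetric [FiniteDimensional 𝕜 E] (hT : T.IsSymmetric) :
    ⨆ a, T.eigenspace a = ⊤ :=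
  Submodule.orthogonal_eq_bot_iff.mp hT.orthogonalComplement_iSup_eigenspaces_eq_bot

end InnerProductSpace

lemma isSymmetric_toEuclideanLin_of_isSymm {n : Type*} [Fintype n] [DecidableEq n]
    {A : Matrix n n ℝ} (hA : A.IsSymm) : A.toEuclideanLin.IsSymmetric :=
  isSymmetric_toEuclideanLin_iff.mpr (isHermitian_iff_isSymm.mpr hA)

lemma trace_mul_vecMulVec_self_mul_self {n R : Type*} [Fintype n] [CommSemiring R]
    (A : Matrix n n R) (v : n → R) :
    (A * (vecMulVec v v * vecMulVec v v)).trace = (v ⬝ᵥ v) * (v ⬝ᵥ A *ᵥ v) := by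
  rw [vecMulVec_mul_vecMulVec, mul_vecMulVec, trace_vecMulVec, dotProduct_smul, smul_eq_mul,
    dotProduct_comm v (A *ᵥ v)]

section SymProd

variable {d : ℕ} {A B F S : Matrix (Fin d) (Fin d) ℝ}

lemma symProd_eq_zero_iff (hA : A.IsSymm) (hB : B.IsSymm) :
    symProd A B = 0 ↔ A * B + B * A = 0 := by
  rw [symProd, hA.eq, hB.eq, smul_eq_zero_iff_right (by norm_num)]

lemma anticommute_toEuclideanLin_of_symProd_eq_zero (hA : A.IsSymm) (hB : B.IsSymm)
    (hAB : symProd A B = 0) :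
    (A.toEuclideanLin * B.toEuclideanLin + B.toEuclideanLin * A.toEuclideanLin :
      Module.End ℝ (EuclideanSpace ℝ (Fin d))) = 0 := by
  rw [Module.End.mul_eq_comp, Module.End.mul_eq_comp, ← toLpLin_mul_same, ← toLpLin_mul_same,
    ← map_add, (symProd_eq_zero_iff hA hB).mp hAB, map_zero]

lemma isEigOf_of_hasEigenvalue {a : ℝ}
    (ha : Module.End.HasEigenvalue (toEuclideanLin F) a) : IsEigOf F a := by
  obtain ⟨x, hx⟩ := ha.exists_hasEigenvector
  exact ⟨x.ofLp, mt (WithLp.ofLp_eq_zero 2).mp hx.2, congrArg WithLp.ofLp hx.apply_eq_smul⟩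

lemma EigCond.not_hasEigenvalue_neg (hF : EigCond F) {a : ℝ} (ha : a ≠ 0)
    (hFa : Module.End.HasEigenvalue (toEuclideanLin F) a) :
    ¬ Module.End.HasEigenvalue (toEuclideanLin F) (-a) := fun hFna ↦
  hF a (-a) (isEigOf_of_hasEigenvalue hFa) (isEigOf_of_hasEigenvalue hFna) ha
    (neg_ne_zero.mpr ha) (add_neg_cancel a)

lemma symProd_vecMulVec_self_eq_zero (hF : F.IsSymm) {v : Fin d → ℝ} (hv : F *ᵥ v = 0) :
    symProd F (vecMulVec v v) = 0 := by
  rw [symProd_eq_zero_iff hF (transpose_vecMulVec v v), mul_vecMulVec, vecMulVec_mul,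
    ← mulVec_transpose, hF.eq, hv, zero_vecMulVec, vecMulVec_zero, add_zero]

lemma dotProduct_mulVec_nonneg_of_trace_nonneg (hF : F.IsSymm)
    (htrace : ∀ Δ : Matrix (Fin d) (Fin d) ℝ, Δ.IsSymm →
      (2 : ℝ) • symProd F Δ = 0 → 0 ≤ 2 * (S * (Δ * Δ)).trace)
    {v : Fin d → ℝ} (hv : F *ᵥ v = 0) : 0 ≤ v ⬝ᵥ S *ᵥ v := by
  obtain rfl | hv0 := eq_or_ne v 0
  · rw [zero_dotProduct]
  have hvv : 0 < v ⬝ᵥ v := dotProduct_star_self_pos_iff.mpr hv0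
  have hΔ := htrace (vecMulVec v v) (transpose_vecMulVec v v)
    (by rw [symProd_vecMulVec_self_eq_zero hF hv, smul_zero])
  rw [trace_mul_vecMulVec_self_mul_self] at hΔ
  exact nonneg_of_mul_nonneg_right (nonneg_of_mul_nonneg_right hΔ two_pos) hvv

lemma re_inner_toEuclideanLin_nonneg_of_trace_nonneg (hF : F.IsSymm)
    (htrace : ∀ Δ : Matrix (Fin d) (Fin d) ℝ, Δ.IsSymm →
      (2 : ℝ) • symProd F Δ = 0 → 0 ≤ 2 * (S * (Δ * Δ)).trace)
    (x : EuclideanSpace ℝ (Fin d)) (hx : x ∈ LinearMap.ker F.toEuclideanLin) :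
    0 ≤ RCLike.re (inner ℝ (S.toEuclideanLin x) x) :=
  dotProduct_mulVec_nonneg_of_trace_nonneg hF htrace (congrArg WithLp.ofLp hx)

end SymProd

theorem statement8_general {𝕜 E : Type*} [RCLike 𝕜] [NormedAddCommGroup E]
    [InnerProductSpace 𝕜 E] {S T : Module.End 𝕜 E} (hT : ⨆ a, T.eigenspace a = ⊤)
    (hS : S.IsSymmetric) (hST : S * T + T * S = 0)
    (hpos : ∀ x ∈ LinearMap.ker T, 0 ≤ RCLike.re (inner 𝕜 (S x) x))
    (hneg : ∀ a ≠ 0, T.HasEigenvalue a → ¬ T.HasEigenvalue (-a)) :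
    S.IsPositive :=
  isPositive_of_re_inner_nonneg_of_sup_ker_eq_top hS
    (ker_sup_ker_eq_top_of_anticommute hT hST hneg) hpos

/-- Let `F, S ∈ S^d` with `S∘F = 0`. If `2·tr(SΔ²) ≥ 0` for every symmetric `Δ` with
`2F∘Δ = 0`, and `F` satisfies the eigenvalue condition (EC), then `S ⪰ 0`. -/
theorem statement8 {d : ℕ}
    (F S : Matrix (Fin d) (Fin d) ℝ) (hFsymm : F.IsSymm) (hSsymm : S.IsSymm)
    (hSF : symProd S F = 0)
    (hineq : ∀ Δ : Matrix (Fin d) (Fin d) ℝ, Δ.IsSymm →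
      (2 : ℝ) • symProd F Δ = 0 → 0 ≤ 2 * (S * (Δ * Δ)).trace)
    (hEC : EigCond F) :
    S.PosSemidef := by
  rw [← isPositive_toEuclideanLin_iff]
  exact statement8_general
    (iSup_eigenspace_eq_top_of_isSymmetric (isSymmetric_toEuclideanLin_of_isSymm hFsymm))
    (isSymmetric_toEuclideanLin_of_isSymm hSsymm)
    (anticommute_toEuclideanLin_of_symProd_eq_zero hSsymm hFsymm hSF)
    (re_inner_toEuclideanLin_nonneg_of_trace_nonneg hFsymm hineq)
    (fun _ ↦ hEC.not_hasEigenvalue_neg)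
end

section
/- If a point (x,Λ) ∈ R^n × S^d satisfies the second-order necessary conditions (2NC) for problem (NSDP), then any triple (x,F,Λ) with F ∈ S^d symmetric and C(x) = F² satisfies the second-order necessary conditions (2NC) for problem (SSV-Sym). -/
open Matrix

/-- The directional derivative `DC_x[z]` of the matrix-valued map `C` at `x` along `z`. -/
noncomputable def DC {n d : ℕ} (C : (Fin n → ℝ) → Matrix (Fin d) (Fin d) ℝ)
    (x z : Fin n → ℝ) : Matrix (Fin d) (Fin d) ℝ :=
  Matrix.of fun i j => deriv (fun t : ℝ => C (x + t • z) i j) 0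

/-- The second directional derivative `D²C_x[z,z]`. -/
noncomputable def D2C {n d : ℕ} (C : (Fin n → ℝ) → Matrix (Fin d) (Fin d) ℝ)
    (x z : Fin n → ℝ) : Matrix (Fin d) (Fin d) ℝ :=
  Matrix.of fun i j => iteratedDeriv 2 (fun t : ℝ => C (x + t • z) i j) 0

/-- The second directional derivative `D²f_x[z,z]`. -/
noncomputable def D2f {n : ℕ} (f : (Fin n → ℝ) → ℝ) (x z : Fin n → ℝ) : ℝ :=
  iteratedDeriv 2 (fun t : ℝ => f (x + t • z)) 0

/-- First-order conditions (NSDP-1C) at `(x,Λ)`: `∇f(x) = DC_x*(Λ)` (w.r.t. the dot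
product on `ℝ^n` and the trace inner product on `S^d`), `ΛC(x) = 0`, `C(x) ⪰ 0`, `Λ ⪰ 0`. -/
noncomputable def NSDP1C {n d : ℕ} (f : (Fin n → ℝ) → ℝ)
    (C : (Fin n → ℝ) → Matrix (Fin d) (Fin d) ℝ)
    (x : Fin n → ℝ) (Λ : Matrix (Fin d) (Fin d) ℝ) : Prop :=
  Λ.IsSymm ∧
  (∀ z : Fin n → ℝ, HasDerivAt (fun t : ℝ => f (x + t • z)) ((Λ * DC C x z).trace) 0) ∧
  Λ * C x = 0 ∧ (C x).PosSemidef ∧ Λ.PosSemidef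

/-- Second-order necessary conditions (NSDP-2NC) at `(x,Λ)`. -/
noncomputable def NSDP2NC {n d : ℕ} (f : (Fin n → ℝ) → ℝ)
    (C : (Fin n → ℝ) → Matrix (Fin d) (Fin d) ℝ)
    (x : Fin n → ℝ) (Λ : Matrix (Fin d) (Fin d) ℝ) : Prop :=
  NSDP1C f C x Λ ∧
    ∀ V : Matrix (Fin d) (Fin (d - (C x).rank)) ℝ, Vᵀ * V = 1 → C x * V = 0 →
      ∀ P : Matrix (Fin d) (Fin d) ℝ, IsMoorePenrose (C x) P →
        ∀ z : Fin n → ℝ, Vᵀ * DC C x z * V = 0 →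
          0 ≤ D2f f x z - (Λ * D2C C x z).trace
              + 2 * (DC C x z * P * DC C x z * Λ).trace

/-- Second-order necessary conditions (SSV-Sym-2NC) at `(x,F,Λ)` with `F ∈ S^d`. -/
noncomputable def SSVSym2NC {n d : ℕ} (f : (Fin n → ℝ) → ℝ)
    (C : (Fin n → ℝ) → Matrix (Fin d) (Fin d) ℝ)
    (x : Fin n → ℝ) (F Λ : Matrix (Fin d) (Fin d) ℝ) : Prop :=
  (Λ.IsSymm ∧
    (∀ z : Fin n → ℝ, HasDerivAt (fun t : ℝ => f (x + t • z)) ((Λ * DC C x z).trace) 0) ∧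
    symProd Λ F = 0 ∧ C x = F * F) ∧
  ∀ (z : Fin n → ℝ) (Δ : Matrix (Fin d) (Fin d) ℝ), Δ.IsSymm →
    DC C x z = (2 : ℝ) • symProd Δ F →
      0 ≤ D2f f x z + 2 * (Λ * (Δ * Δ)).trace - (Λ * D2C C x z).trace

/-!
Since `Λ C(x) = Λ F² = 0` forces `Λ F = 0`, the multiplier annihilates `F`. A direction `(z, Δ)`
feasible for (SSV-Sym) has `DC_x[z] = ΔF + FΔ`, whose compression to the null space of `F` vanishes,
so `z` is admissible in 2NC for (NSDP). For it, the curvature term collapses to `tr(Q ΔΛΔ)` with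
`Q = F C(x)† F`. This `Q` is an orthogonal projection and `ΔΛΔ ⪰ 0`, hence
`tr(Q ΔΛΔ) ≤ tr(ΔΛΔ) = tr(ΛΔ²)`, and the second-order inequality passes from (NSDP) to (SSV-Sym).
-/

theorem isStarProjection_mul_mul_self {R : Type*} [Semigroup R] [StarMul R] {a p : R}
    (ha : IsSelfAdjoint a) (hp : IsSelfAdjoint p) (hpa : p * (a * a) * p = p) :
    IsStarProjection (a * p * a) where
  isIdempotentElem := by
    calc a * p * a * (a * p * a) = a * (p * (a * a) * p) * a := by simp only [mul_assoc]
      _ = a * p * a := by rw [hpa]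
  isSelfAdjoint := by simpa only [ha.star_eq] using hp.conjugate a

section HermitianMatrix

variable {ι R : Type*} [Fintype ι] [NonUnitalSemiring R] [StarRing R]

theorem mul_eq_zero_comm_of_isHermitian {A B : Matrix ι ι R} (hA : A.IsHermitian)
    (hB : B.IsHermitian) : A * B = 0 ↔ B * A = 0 := by
  rw [← conjTranspose_eq_zero, conjTranspose_mul, hA.eq, hB.eq]

theorem conjTranspose_mul_anticommutator_mul_eq_zero {κ : Type*} {F : Matrix ι ι R}
    {V : Matrix ι κ R} (hF : F.IsHermitian) (Δ : Matrix ι ι R) (hFV : F * V = 0) :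
    Vᴴ * (Δ * F + F * Δ) * V = 0 := by
  have hVF : Vᴴ * F = 0 := by
    rw [← conjTranspose_eq_zero, conjTranspose_mul, conjTranspose_conjTranspose, hF.eq, hFV]
  calc Vᴴ * (Δ * F + F * Δ) * V = Vᴴ * Δ * (F * V) + Vᴴ * F * (Δ * V) := by
        simp only [Matrix.mul_add, Matrix.add_mul, Matrix.mul_assoc]
    _ = 0 := by rw [hFV, hVF, Matrix.mul_zero, Matrix.zero_mul, add_zero]

end HermitianMatrix

section TraceInequality

variable {ι R : Type*} [Fintype ι]

theorem trace_isStarProjection_mul_le [CommRing R] [StarRing R] [PartialOrder R] [AddLeftMono R]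
    {Q S : Matrix ι ι R} (hQ : IsStarProjection Q) (hS : S.PosSemidef) :
    (Q * S).trace ≤ S.trace := by
  classical
  have hcompl : IsStarProjection (1 - Q) := hQ.one_sub
  rw [← sub_nonneg]
  calc 0 ≤ ((1 - Q) * S * (1 - Q)ᴴ).trace := (hS.mul_mul_conjTranspose_same (1 - Q)).trace_nonneg
    _ = ((1 - Q) * (1 - Q) * S).trace := by
        rw [← star_eq_conjTranspose, hcompl.isSelfAdjoint.star_eq, trace_mul_comm, mul_assoc]
    _ = S.trace - (Q * S).trace := by
        rw [hcompl.isIdempotentElem.eq, sub_mul, one_mul, trace_sub]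

theorem trace_anticommutator_mul_mul_anticommutator_mul [CommSemiring R]
    {Λ F : Matrix ι ι R} (P Δ : Matrix ι ι R) (hΛF : Λ * F = 0) (hFΛ : F * Λ = 0) :
    ((Δ * F + F * Δ) * P * (Δ * F + F * Δ) * Λ).trace = (F * P * F * (Δ * Λ * Δ)).trace := by
  have hright : (Δ * F + F * Δ) * Λ = F * Δ * Λ := by
    rw [add_mul, mul_assoc Δ, hFΛ, mul_zero, zero_add]
  have hleft : Λ * (Δ * F + F * Δ) = Λ * Δ * F := by
    rw [mul_add, ← mul_assoc Λ F, hΛF, zero_mul, add_zero, mul_assoc]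
  calc ((Δ * F + F * Δ) * P * (Δ * F + F * Δ) * Λ).trace
      = ((Δ * F + F * Δ) * P * (F * Δ * Λ)).trace := by rw [mul_assoc, hright]
    _ = (Λ * (Δ * F + F * Δ) * (P * F * Δ)).trace := by
        rw [← mul_assoc, trace_mul_comm]; simp only [mul_assoc]
    _ = (Λ * Δ * (F * P * F * Δ)).trace := by rw [hleft]; simp only [mul_assoc]
    _ = (F * P * F * (Δ * Λ * Δ)).trace := by rw [trace_mul_comm]; simp only [mul_assoc]

theorem trace_anticommutator_mul_mul_anticommutator_mul_le [CommRing R] [StarRing R]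
    [PartialOrder R] [AddLeftMono R] {Λ F P Δ : Matrix ι ι R} (hΛ : Λ.PosSemidef)
    (hF : F.IsHermitian) (hP : P.IsHermitian) (hΔ : Δ.IsHermitian) (hΛF : Λ * F = 0)
    (hPF : P * (F * F) * P = P) :
    ((Δ * F + F * Δ) * P * (Δ * F + F * Δ) * Λ).trace ≤ (Λ * (Δ * Δ)).trace := by
  have hFΛ : F * Λ = 0 := (mul_eq_zero_comm_of_isHermitian hΛ.isHermitian hF).mp hΛF
  have hproj : IsStarProjection (F * P * F) := isStarProjection_mul_mul_self hF hP hPF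
  have hΔΛΔ : (Δ * Λ * Δ).PosSemidef := by
    simpa only [hΔ.eq] using hΛ.mul_mul_conjTranspose_same Δ
  calc ((Δ * F + F * Δ) * P * (Δ * F + F * Δ) * Λ).trace
      = (F * P * F * (Δ * Λ * Δ)).trace :=
        trace_anticommutator_mul_mul_anticommutator_mul P Δ hΛF hFΛ
    _ ≤ (Δ * Λ * Δ).trace := trace_isStarProjection_mul_le hproj hΔΛΔ
    _ = (Λ * (Δ * Δ)).trace := by rw [mul_assoc, trace_mul_comm, mul_assoc]

end TraceInequality

theorem exists_orthonormal_cols_mul_eq_zero {𝕜 m n κ : Type*} [RCLike 𝕜] [Finite m] [Fintype n]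
    [Fintype κ] [DecidableEq κ] (A : Matrix m n 𝕜)
    (hκ : A.rank + Fintype.card κ = Fintype.card n) :
    ∃ V : Matrix n κ 𝕜, Vᴴ * V = 1 ∧ A * V = 0 := by
  classical
  cases nonempty_fintype m
  let K : Submodule 𝕜 (EuclideanSpace 𝕜 n) := LinearMap.ker (toEuclideanLin A)
  have hrank : A.rank = Module.finrank 𝕜 (LinearMap.range (toEuclideanLin A)) :=
    A.rank_eq_finrank_range_toLin (EuclideanSpace.basisFun m 𝕜).toBasis
      (EuclideanSpace.basisFun n 𝕜).toBasis
  have hK : Module.finrank 𝕜 K = Fintype.card κ := by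
    have hnullity := (toEuclideanLin A).finrank_range_add_finrank_ker
    rw [finrank_euclideanSpace, ← hrank] at hnullity
    exact Nat.add_left_cancel (hnullity.trans hκ.symm)
  let b : OrthonormalBasis κ 𝕜 K :=
    (stdOrthonormalBasis 𝕜 K).reindex (Fintype.equivOfCardEq (by simpa using hK))
  refine ⟨of fun i j => (b j : EuclideanSpace 𝕜 n) i, ?_, ?_⟩
  · ext i j
    have horth := orthonormal_iff_ite.mp b.orthonormal i j
    rw [Submodule.coe_inner, PiLp.inner_apply] at horth
    rw [one_apply, ← horth, mul_apply]
    exact Finset.sum_congr rfl fun k _ => mul_comm _ _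
  · ext i j
    exact congrArg (fun v : EuclideanSpace 𝕜 m => v i) (LinearMap.mem_ker.mp (b j).2)

section SecondOrderConditions

variable {n d : ℕ}

-- Since `0⁻¹ = 0`, inverting the eigenvalues is the right choice for singular `A` as well.
theorem isMoorePenrose_cfc_inv_s12 {A : Matrix (Fin d) (Fin d) ℝ} (hA : A.IsHermitian) :
    IsMoorePenrose A (cfc (fun t : ℝ => t⁻¹) A) := by
  have hcont (g : ℝ → ℝ) : ContinuousOn g (spectrum ℝ A) := A.finite_real_spectrum.continuousOn g
  have hcfc_id : cfc (fun t : ℝ => t) A = A := cfc_id' ℝ A hA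
  set P := cfc (fun t : ℝ => t⁻¹) A with hP
  have hcomm : P * A = A * P := by
    simpa only [hcfc_id] using (cfc_commute_cfc (fun t : ℝ => t⁻¹) (fun t : ℝ => t) A).eq
  have hAP : A * P = cfc (fun t : ℝ => t * t⁻¹) A := by
    rw [cfc_mul _ _ A (hcont _) (hcont _), hcfc_id]
  have hsymm : (A * P)ᵀ = A * P := by
    rw [hAP]
    exact (cfc_predicate (fun t : ℝ => t * t⁻¹) A).star_eq
  refine ⟨?_, ?_, hsymm, by rw [hcomm, hsymm]⟩
  · calc A * P * A = cfc (fun t : ℝ => t * t⁻¹ * t) A := by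
          rw [cfc_mul _ _ A (hcont _) (hcont _), ← hAP, hcfc_id]
      _ = A := by simp only [mul_inv_mul_cancel, hcfc_id]
  · have hinv (t : ℝ) : t⁻¹ * (t * t⁻¹) = t⁻¹ := by
      simpa only [inv_inv, mul_assoc] using mul_inv_mul_cancel t⁻¹
    calc P * A * P = cfc (fun t : ℝ => t⁻¹ * (t * t⁻¹)) A := by
          rw [cfc_mul _ _ A (hcont _) (hcont _), ← hAP, ← hP, mul_assoc]
      _ = P := by simp only [hinv, hP]

theorem symProd_eq_smul_anticommutator {A B : Matrix (Fin d) (Fin d) ℝ} (hA : A.IsSymm)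
    (hB : B.IsSymm) : symProd A B = (2⁻¹ : ℝ) • (A * B + B * A) := by
  rw [symProd, hA.eq, hB.eq]

theorem statement12_general {f : (Fin n → ℝ) → ℝ} {C : (Fin n → ℝ) → Matrix (Fin d) (Fin d) ℝ}
    {x : Fin n → ℝ} {F Λ : Matrix (Fin d) (Fin d) ℝ} (h2 : NSDP2NC f C x Λ) (hFsymm : F.IsSymm)
    (hF : C x = F * F) : SSVSym2NC f C x F Λ := by
  obtain ⟨⟨hΛ, hgrad, hΛC, hCx, hΛpos⟩, hcurv⟩ := h2
  have hFherm : F.IsHermitian := hFsymm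
  have hΛF : Λ * F = 0 := by
    rwa [← mul_self_mul_conjTranspose_eq_zero, hFherm.eq, ← hF]
  have hFΛ : F * Λ = 0 := (mul_eq_zero_comm_of_isHermitian hΛpos.isHermitian hFherm).mp hΛF
  refine ⟨⟨hΛ, hgrad, ?_, hF⟩, fun z Δ hΔ hDC => ?_⟩
  · rw [symProd_eq_smul_anticommutator hΛ hFsymm, hΛF, hFΛ, add_zero, smul_zero]
  have hM : DC C x z = Δ * F + F * Δ := by
    rw [hDC, symProd_eq_smul_anticommutator hΔ hFsymm, smul_inv_smul₀ two_ne_zero]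
  obtain ⟨V, hV, hCV⟩ := exists_orthonormal_cols_mul_eq_zero (κ := Fin (d - (C x).rank)) (C x)
    (by simp [(C x).rank_le_width])
  have hFV : F * V = 0 := by
    rwa [← conjTranspose_mul_self_mul_eq_zero, hFherm.eq, ← hF]
  have hcritical : Vᵀ * DC C x z * V = 0 :=
    hM ▸ conjTranspose_mul_anticommutator_mul_eq_zero hFherm Δ hFV
  have hpinv : IsMoorePenrose (C x) (cfc (fun t : ℝ => t⁻¹) (C x)) :=
    isMoorePenrose_cfc_inv_s12 hCx.isHermitian
  have hineq := hcurv V hV hCV _ hpinv z hcritical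
  have htrace := trace_anticommutator_mul_mul_anticommutator_mul_le hΛpos hFherm
    (cfc_predicate (fun t : ℝ => t⁻¹) (C x)) hΔ hΛF (hF ▸ hpinv.2.1)
  rw [← hM] at htrace
  linarith

end SecondOrderConditions

/-- If `(x,Λ)` satisfies 2NC for (NSDP), then any `(x,F,Λ)` with `F ∈ S^d` symmetric and
`C(x) = F²` satisfies 2NC for (SSV-Sym). -/
theorem statement12 {n d : ℕ} (f : (Fin n → ℝ) → ℝ)
    (C : (Fin n → ℝ) → Matrix (Fin d) (Fin d) ℝ)
    (hf : ContDiff ℝ 2 f)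
    (hC : ∀ i j, ContDiff ℝ 2 fun x => C x i j)
    (hCsymm : ∀ x, (C x).IsSymm)
    (x : Fin n → ℝ) (Λ : Matrix (Fin d) (Fin d) ℝ)
    (h2 : NSDP2NC f C x Λ)
    (F : Matrix (Fin d) (Fin d) ℝ) (hFsymm : F.IsSymm) (hF : C x = F * F) :
    SSVSym2NC f C x F Λ :=
  statement12_general h2 hFsymm hF
end
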